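/- arXiv:1103.5619 — 6 statements merged into one kernel-verified Lean document; each statement's English description precedes it below -/
import Mathlib

section
/- For every finite group G and every positive integer d, there are only finitely many integral representations of G of dimension d up to isomorphism. Concretely: there is a finite set R of group homomorphisms G → GL_d(ℤ) such that every group homomorphism ρ : G → GL_d(ℤ) is conjugate to a member of R, i.e. there exist ρ' ∈ R and P ∈ GL_d(ℤ) with ρ(g) = P · ρ'(g) · P⁻¹ for all g ∈ G. -/
/-!
In a lattice with a norm invariant under `G`, the shortest nonzero vectors are permuted by `G`.
Let `W` be the saturation of their span, and choose a maximal independent set of them. By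
pigeonhole, a multiple `N • x` of each `x` in `W`, with `N` depending only on the rank, lies in
the span of that set: some bounded multiple of `x` is so close to the span that the difference is
shorter than the shortest vectors, hence zero. Exchanging one vector of the set for another
shortest vector `s` shows that the coordinates of `N • s` are bounded. Hence `G` acts on `W` by
bounded matrices in a suitable basis, and by induction on the rank it does so on `M ⧸ W`.
Averaging a section of `M → M ⧸ W` over `G` and rounding off multiples of `|G|` bounds the
off-diagonal block of `M`. There are only finitely many homomorphisms from `G` to bounded integer
matrices.
-/

open Module Submodule

namespace JordanZassenhaus

theorem sum_smul_update {ι R M : Type*} [Fintype ι] [DecidableEq ι] [Ring R] [AddCommGroup M]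
    [Module R M] (c : ι → R) (v : ι → M) (k : ι) (s : M) :
    ∑ i, c i • Function.update v k s i = ∑ i, c i • v i + c k • (s - v k) := by
  have hupdate (i : ι) :
      Function.update v k s i = v i + (Pi.single k (s - v k) : ι → M) i := by
    obtain rfl | hik := eq_or_ne i k <;> simp [*]
  simp only [hupdate, smul_add, Finset.sum_add_distrib, Pi.single_apply, smul_ite, smul_zero,
    Finset.sum_ite_eq', Finset.mem_univ, if_true]

theorem abs_sub_lt_of_ediv_eq {a b k : ℤ} (hk : 0 < k) (h : a / k = b / k) : |a - b| < k := by
  have ha := Int.emod_add_mul_ediv a k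
  have hb := Int.emod_add_mul_ediv b k
  have ha₀ := Int.emod_nonneg a hk.ne'
  have hb₀ := Int.emod_nonneg b hk.ne'
  have ha₁ := Int.emod_lt_of_pos a hk
  have hb₁ := Int.emod_lt_of_pos b hk
  rw [h] at ha
  rw [abs_lt]
  constructor <;> linarith

section ShortestVectors

variable {ι M : Type*} [AddCommGroup M]

/-- `x` is a shortest nonzero vector of the lattice `M` with respect to `p`. -/
def IsShortest (p : Seminorm ℤ M) (x : M) : Prop :=
  x ≠ 0 ∧ ∀ y, y ≠ 0 → p x ≤ p y

theorem IsShortest.map {p : Seminorm ℤ M} {x : M} (hx : IsShortest p x) {f : M →ₗ[ℤ] M}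
    (hf : Function.Injective f) (hpf : p (f x) = p x) : IsShortest p (f x) :=
  ⟨(map_ne_zero_iff f hf).2 hx.1, fun y hy ↦ hpf.trans_le (hx.2 y hy)⟩

theorem IsShortest.comp_subtype {p : Seminorm ℤ M} {W : Submodule ℤ M} {x : W}
    (hx : IsShortest p (x : M)) : IsShortest (p.comp W.subtype) x :=
  ⟨fun h ↦ hx.1 (by simp [h]), fun y hy ↦ hx.2 y (by simpa using hy)⟩

variable [Fintype ι]

-- Pigeonhole on the position of `(n * a i % k)ᵢ` among the `m ^ card ι` boxes of side `|k| / m`.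
theorem exists_pos_le_forall_mul_abs_sub_lt (a : ι → ℤ) {k : ℤ} (hk : k ≠ 0) {m : ℕ} (hm : 0 < m) :
    ∃ n : ℕ, 0 < n ∧ n ≤ m ^ Fintype.card ι ∧
      ∃ q : ι → ℤ, ∀ i, m * |n * a i - k * q i| < |k| := by
  classical
  have hk' : 0 < |k| := abs_pos.2 hk
  have hm' : (0 : ℤ) < m := by exact_mod_cast hm
  let box (n : ℕ) (i : ι) : ℤ := m * (n * a i % k) / |k|
  have mapsTo : ∀ n ∈ Finset.range (m ^ Fintype.card ι + 1),
      box n ∈ Fintype.piFinset fun _ : ι ↦ Finset.Ico (0 : ℤ) m := by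
    intro n _
    refine Fintype.mem_piFinset.2 fun i ↦ Finset.mem_Ico.2 ⟨?_, ?_⟩
    · exact Int.ediv_nonneg (mul_nonneg hm'.le (Int.emod_nonneg _ hk)) hk'.le
    · exact Int.ediv_lt_of_lt_mul hk' (mul_lt_mul_of_pos_left (Int.emod_lt_abs _ hk) hm')
  obtain ⟨x, hx, y, hy, hxy, hbox⟩ := Finset.exists_ne_map_eq_of_card_lt_of_maps_to
    (by simp [Fintype.card_piFinset]) mapsTo
  wlog hlt : x < y generalizing x y
  · exact this y hy x hx hxy.symm hbox.symm (by lia)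
  rw [Finset.mem_range] at hx hy
  refine ⟨y - x, by lia, by lia, fun i ↦ y * a i / k - x * a i / k, fun i ↦ ?_⟩
  have hrem : ((y - x : ℕ) : ℤ) * a i - k * (y * a i / k - x * a i / k) =
      y * a i % k - x * a i % k := by
    rw [Nat.cast_sub hlt.le, Int.emod_def, Int.emod_def]
    ring
  rw [hrem, ← Nat.abs_cast m, ← abs_mul, mul_sub]
  exact abs_sub_lt_of_ediv_eq hk' (congrFun hbox i).symm

variable {p : Seminorm ℤ M} (hp : ∀ x, x ≠ 0 → 0 < p x) {v : ι → M} (hv : ∀ i, IsShortest p (v i))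
include hp hv

theorem eq_zero_of_smul_eq_sum_smul {z : M} {k : ℤ} (hk : k ≠ 0) {r : ι → ℤ}
    (hz : k • z = ∑ i, r i • v i) (hr : ∀ i, (Fintype.card ι + 1) * |r i| ≤ |k|) : z = 0 := by
  by_contra hne
  have hr' (i : ι) : ((Fintype.card ι : ℝ) + 1) * ‖r i‖ ≤ ‖k‖ := by
    rw [Int.norm_eq_abs, Int.norm_eq_abs]
    exact_mod_cast hr i
  have hle : (Fintype.card ι + 1) * (‖k‖ * p z) ≤ Fintype.card ι * (‖k‖ * p z) :=
    calc (Fintype.card ι + 1) * (‖k‖ * p z)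
        = (Fintype.card ι + 1) * p (∑ i, r i • v i) := by rw [← hz, map_smul_eq_mul]
      _ ≤ (Fintype.card ι + 1) * ∑ i, ‖r i‖ * p (v i) := by
          gcongr
          simpa only [map_smul_eq_mul] using
            Finset.le_sum_of_subadditive p (map_zero p).le (map_add_le_add p) Finset.univ
              fun i ↦ r i • v i
      _ = ∑ i, (Fintype.card ι + 1) * ‖r i‖ * p (v i) := by simp only [Finset.mul_sum, mul_assoc]
      _ ≤ ∑ _i : ι, ‖k‖ * p z := by
          gcongr with i
          · exact hr' i
          · exact (hv i).2 z hne
      _ = Fintype.card ι * (‖k‖ * p z) := by simp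
  have : 0 < ‖k‖ * p z := mul_pos (norm_pos_iff.2 hk) (hp z hne)
  linarith

theorem exists_nsmul_mem_span {x : M} {k : ℤ} (hk : k ≠ 0)
    (hx : k • x ∈ span ℤ (Set.range v)) :
    ∃ n : ℕ, 0 < n ∧ n ≤ (Fintype.card ι + 1) ^ Fintype.card ι ∧
      n • x ∈ span ℤ (Set.range v) := by
  obtain ⟨a, ha⟩ := (mem_span_range_iff_exists_fun ℤ).1 hx
  obtain ⟨n, hn, hn', q, hq⟩ := exists_pos_le_forall_mul_abs_sub_lt a hk (Fintype.card ι).succ_pos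
  refine ⟨n, hn, hn', (mem_span_range_iff_exists_fun ℤ).2 ⟨q, ?_⟩⟩
  suffices n • x - ∑ i, q i • v i = 0 from (sub_eq_zero.1 this).symm
  refine eq_zero_of_smul_eq_sum_smul hp hv hk (r := fun i ↦ n * a i - k * q i) ?_ fun i ↦ ?_
  · rw [smul_sub, smul_comm, ← ha]
    simp only [sub_smul, mul_smul, Finset.sum_sub_distrib, Finset.smul_sum, natCast_zsmul]
  · exact_mod_cast (hq i).le

/-- For every `n`-tuple of shortest vectors of a lattice, multiplication by this integer maps each
vector rationally dependent on the tuple into its integral span. -/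
def spanExponent (n : ℕ) : ℕ := ((n + 1) ^ n).factorial

omit [Fintype ι] hp hv in
theorem spanExponent_ne_zero (n : ℕ) : spanExponent n ≠ 0 := Nat.factorial_ne_zero _

theorem spanExponent_smul_mem_span {x : M} {k : ℤ} (hk : k ≠ 0)
    (hx : k • x ∈ span ℤ (Set.range v)) :
    spanExponent (Fintype.card ι) • x ∈ span ℤ (Set.range v) := by
  obtain ⟨n, hn, hn', hmem⟩ := exists_nsmul_mem_span hp hv hk hx
  obtain ⟨t, ht⟩ := Nat.dvd_factorial hn hn'
  rw [spanExponent, ht, mul_comm, mul_smul]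
  exact nsmul_mem hmem t

-- Exchange: if `e k ≠ 0`, then `v` with `s` in place of `v k` is again a tuple of shortest vectors
-- on which `v k` depends, so `e k` divides the square of the exponent.
theorem abs_coord_le_spanExponent_sq (hli : LinearIndependent ℤ v) {s : M} (hs : IsShortest p s)
    {e : ι → ℤ} (he : ∑ i, e i • v i = spanExponent (Fintype.card ι) • s) (k : ι) :
    |e k| ≤ spanExponent (Fintype.card ι) ^ 2 := by
  classical
  set N : ℕ := spanExponent (Fintype.card ι) with hN
  obtain hk | hk := eq_or_ne (e k) 0
  · simp [hk]
  let w : ι → M := Function.update v k s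
  have hw (i : ι) : IsShortest p (w i) := by
    obtain rfl | hik := eq_or_ne i k <;> simp [w, *]
  have hs_mem : s ∈ span ℤ (Set.range w) := subset_span ⟨k, Function.update_self k s v⟩
  have hk_mem : e k • v k ∈ span ℤ (Set.range w) := by
    have : e k • v k = N • s + e k • s - ∑ i, e i • w i := by
      rw [sum_smul_update, he]
      module
    rw [this]
    exact sub_mem (add_mem (nsmul_mem hs_mem _) (smul_mem _ _ hs_mem))
      (sum_mem fun i _ ↦ smul_mem _ _ (subset_span ⟨i, rfl⟩))
  obtain ⟨a, ha⟩ := (mem_span_range_iff_exists_fun ℤ).1 (spanExponent_smul_mem_span hp hw hk hk_mem)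
  rw [sum_smul_update, ← hN] at ha
  have hrel : ∑ i, (N * a i + a k * e i - (Pi.single k (a k * N + N ^ 2) : ι → ℤ) i) • v i = 0 := by
    simp only [add_smul, sub_smul, mul_smul, Finset.sum_add_distrib, Finset.sum_sub_distrib,
      ← Finset.smul_sum, he, Pi.single_apply, ite_smul, zero_smul, Finset.sum_ite_eq',
      Finset.mem_univ, if_true]
    rw [eq_sub_iff_add_eq.2 ha]
    module
  have hdvd : (N : ℤ) ^ 2 = a k * e k := by
    have := Fintype.linearIndependent_iff.1 hli _ hrel k
    simp only [Pi.single_eq_same] at this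
    linarith
  exact Int.le_of_dvd (by have := spanExponent_ne_zero (Fintype.card ι); positivity)
    ((abs_dvd _ _).2 ⟨a k, by rw [hdvd, mul_comm]⟩)

end ShortestVectors

section Orbit

variable {G ι M : Type*} [Group G] [Fintype G] [Fintype ι] [AddCommGroup M]

/-- The sum of the absolute values of the `b`-coordinates over the `G`-orbit of a vector, a
`G`-invariant norm. -/
noncomputable def orbitSeminorm (ρ : Representation ℤ G M) (b : Basis ι ℤ M) : Seminorm ℤ M :=
  ∑ g, ∑ i, (Seminorm.of (fun x : ℤ ↦ ‖x‖) norm_add_le norm_mul).comp (b.coord i ∘ₗ ρ g)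

variable (ρ : Representation ℤ G M) (b : Basis ι ℤ M)

theorem orbitSeminorm_apply (x : M) :
    orbitSeminorm ρ b x = ((∑ g, ∑ i, (b.repr (ρ g x) i).natAbs : ℕ) : ℝ) := by
  simp only [orbitSeminorm, Int.norm_eq_abs, sum_apply, Seminorm.comp_apply,
    LinearMap.coe_comp, Function.comp_apply, Basis.coord_apply, Nat.cast_sum, Nat.cast_natAbs,
    Int.cast_abs]
  rfl

theorem orbitSeminorm_apply_rho (g : G) (x : M) :
    orbitSeminorm ρ b (ρ g x) = orbitSeminorm ρ b x := by
  simp only [orbitSeminorm_apply, ← Module.End.mul_apply, ← map_mul]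
  congr 1
  exact Equiv.sum_comp (Equiv.mulRight g) fun h ↦ ∑ i, (b.repr (ρ h x) i).natAbs

theorem orbitSeminorm_pos {x : M} (hx : x ≠ 0) : 0 < orbitSeminorm ρ b x := by
  refine (apply_nonneg _ _).lt_of_ne' fun h ↦ hx (b.ext_elem fun i ↦ ?_)
  rw [orbitSeminorm_apply, Nat.cast_eq_zero, Finset.sum_eq_zero_iff] at h
  simpa using Finset.sum_eq_zero_iff.1 (h 1 (Finset.mem_univ 1)) i (Finset.mem_univ i)

theorem exists_isShortest_orbitSeminorm [Nontrivial M] : ∃ x, IsShortest (orbitSeminorm ρ b) x := by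
  obtain ⟨x, hx, hmin⟩ := WellFounded.has_min
    (measure fun x ↦ ∑ g, ∑ i, (b.repr (ρ g x) i).natAbs).wf {x : M | x ≠ 0} (exists_ne 0)
  refine ⟨x, hx, fun y hy ↦ ?_⟩
  rw [orbitSeminorm_apply, orbitSeminorm_apply, Nat.cast_le]
  exact not_lt.1 (hmin y hy)

end Orbit

section ScaledCoordinates

variable {M : Type*} [AddCommGroup M]

theorem exists_scaled_coordinates {ι : Type*} [Fintype ι] {v : ι → M}
    (hv : LinearIndependent ℤ v) {N : ℕ} (hN : ∀ x, N • x ∈ span ℤ (Set.range v)) :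
    ∃ e : M →ₗ[ℤ] ι → ℤ, ∀ x, ∑ i, e x i • v i = N • x := by
  let mulN : M →ₗ[ℤ] span ℤ (Set.range v) :=
    (LinearMap.lsmul ℤ M N).codRestrict _ (by simpa using hN)
  refine ⟨(Basis.span hv).equivFun.toLinearMap ∘ₗ mulN, fun x ↦ ?_⟩
  simpa [mulN, Basis.span_apply] using
    congrArg (Submodule.subtype _) ((Basis.span hv).sum_equivFun (mulN x))

theorem finite_setOf_forall_nsmul_mem [Module.Finite ℤ M] {N : ℕ} (hN : N ≠ 0) :
    {S : Submodule ℤ M | ∀ x, N • x ∈ S}.Finite := by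
  let I : Ideal ℤ := Ideal.span {(N : ℤ)}
  have : NeZero N := ⟨hN⟩
  have : Finite (ℤ ⧸ I) := .of_equiv _ (Int.quotientSpanNatEquivZMod N).symm.toEquiv
  have : Finite (M ⧸ I • (⊤ : Submodule ℤ M)) := finite_quotient_smul I Module.Finite.fg_top
  have : Finite (Submodule ℤ (M ⧸ I • (⊤ : Submodule ℤ M))) := .of_injective _ SetLike.coe_injective
  have : Finite (Set.Ici (I • (⊤ : Submodule ℤ M))) := .of_equiv _ (comapMkQRelIso _).toEquiv
  refine (Set.toFinite (Set.Ici (I • (⊤ : Submodule ℤ M)))).subset fun S hS ↦ ?_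
  rw [Set.mem_Ici, ideal_span_singleton_smul]
  rintro _ ⟨x, -, rfl⟩
  simpa using hS x

theorem finrank_eq_of_forall_nsmul_mem [Module.Finite ℤ M] [Module.Free ℤ M] {N : ℕ} (hN : N ≠ 0)
    {S : Submodule ℤ M} (hS : ∀ x, N • x ∈ S) : finrank ℤ S = finrank ℤ M := by
  let mulN : M →ₗ[ℤ] S := (LinearMap.lsmul ℤ M N).codRestrict _ (by simpa using hS)
  refine le_antisymm S.finrank_le (LinearMap.finrank_le_finrank_of_injective (f := mulN) ?_)
  intro x y hxy
  have hxy' : N • x = N • y := by simpa [mulN] using congrArg Subtype.val hxy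
  exact AddSubgroup.nsmulAddMonoidHom_injective_of_isTorsionFree hN hxy'

theorem exists_nat_forall_abs_le {α : Type*} [Finite α] (f : α → ℤ) : ∃ c : ℕ, ∀ a, |f a| ≤ c := by
  obtain ⟨c, hc⟩ := (Set.finite_range fun a ↦ (f a).natAbs).bddAbove
  exact ⟨c, fun a ↦ by rw [Int.abs_eq_natAbs]; exact_mod_cast hc ⟨a, rfl⟩⟩

-- `S` runs over the finitely many lattices between `N ℤ^ι` and `ℤ^ι`.
theorem exists_forall_exists_bounded_basis (ι : Type*) [Finite ι] [DecidableEq ι] {N : ℕ}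
    (hN : N ≠ 0) :
    ∃ c : ℕ, ∀ (S : Submodule ℤ (ι → ℤ)) (hS : ∀ x, N • x ∈ S), ∃ b : Basis ι ℤ S,
      (∀ i j, |(b j : ι → ℤ) i| ≤ c) ∧
      ∀ i j, |b.repr ⟨N • Pi.single j 1, hS _⟩ i| ≤ c := by
  have := Fintype.ofFinite ι
  have hbasis (S : {S : Submodule ℤ (ι → ℤ) | ∀ x, N • x ∈ S}) : Nonempty (Basis ι ℤ S.1) :=
    ⟨(finBasisOfFinrankEq ℤ S.1 ((finrank_eq_of_forall_nsmul_mem hN S.2).trans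
      (finrank_fintype_fun_eq_card ℤ))).reindex (Fintype.equivFin ι).symm⟩
  let b S := (hbasis S).some
  have := (finite_setOf_forall_nsmul_mem (M := ι → ℤ) hN).to_subtype
  obtain ⟨c₁, hc₁⟩ := exists_nat_forall_abs_le
    fun x : {S : Submodule ℤ (ι → ℤ) | ∀ x, N • x ∈ S} × ι × ι ↦ (b x.1 x.2.2 : ι → ℤ) x.2.1
  obtain ⟨c₂, hc₂⟩ := exists_nat_forall_abs_le
    fun x : {S : Submodule ℤ (ι → ℤ) | ∀ x, N • x ∈ S} × ι × ι ↦
      (b x.1).repr ⟨N • Pi.single x.2.2 1, x.1.2 _⟩ x.2.1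
  refine ⟨max c₁ c₂, fun S hS ↦ ⟨b ⟨S, hS⟩, fun i j ↦ ?_, fun i j ↦ ?_⟩⟩
  · exact (hc₁ (⟨S, hS⟩, i, j)).trans (mod_cast le_max_left c₁ c₂)
  · exact (hc₂ (⟨S, hS⟩, i, j)).trans (mod_cast le_max_right c₁ c₂)

theorem exists_forall_exists_basis_of_scaled_coordinates (ι : Type*) [Fintype ι] {N : ℕ}
    (hN : N ≠ 0) :
    ∃ c : ℕ, ∀ {M : Type*} [AddCommGroup M] [IsTorsionFree ℤ M] {v : ι → M},
      LinearIndependent ℤ v → ∀ e : M →ₗ[ℤ] ι → ℤ, (∀ x, ∑ i, e x i • v i = N • x) →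
      ∃ b : Basis ι ℤ M, (∀ i j, |e (b j) i| ≤ c) ∧ ∀ i j, |b.repr (v j) i| ≤ c := by
  classical
  obtain ⟨c, hc⟩ := exists_forall_exists_bounded_basis ι hN
  refine ⟨c, fun {M} _ _ v hv e he ↦ ?_⟩
  have e_sum (x : ι → ℤ) : e (∑ i, x i • v i) = N • x :=
    hv.fintypeLinearCombination_injective <| by
      simp only [Fintype.linearCombination_apply, he, Finset.smul_sum, Pi.smul_apply, smul_assoc]
  have e_inj : Function.Injective e := fun x y hxy ↦
    AddSubgroup.nsmulAddMonoidHom_injective_of_isTorsionFree hN <| by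
      simp only [nsmulAddMonoidHom_apply, ← he, hxy]
  have hS (x : ι → ℤ) : N • x ∈ LinearMap.range e := ⟨_, e_sum x⟩
  obtain ⟨b, hb, hb'⟩ := hc (LinearMap.range e) hS
  let E := LinearEquiv.ofInjective e e_inj
  refine ⟨b.map E.symm, fun i j ↦ ?_, fun i j ↦ ?_⟩
  · have : e (E.symm (b j)) = b j := congrArg Subtype.val (E.apply_symm_apply (b j))
    simpa only [Basis.map_apply, this] using hb i j
  · have e_v : e (v j) = N • Pi.single j 1 := by
      simpa [Pi.single_apply] using e_sum (Pi.single j 1)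
    have : E (v j) = ⟨N • Pi.single j 1, hS _⟩ := Subtype.ext e_v
    simpa [this] using hb' i j

theorem abs_toMatrix_le_of_scaled_coordinates {ι : Type*} [Fintype ι] [DecidableEq ι] {N : ℕ}
    (hN : N ≠ 0) {v : ι → M} {e : M →ₗ[ℤ] ι → ℤ} (he : ∀ x, ∑ i, e x i • v i = N • x)
    {b : Basis ι ℤ M} {c : ℕ} (hb : ∀ i j, |e (b j) i| ≤ c)
    (hb' : ∀ i j, |b.repr (v j) i| ≤ c) {f : M →ₗ[ℤ] M} {K : ℕ}
    (hf : ∀ i j, |e (f (v j)) i| ≤ K) (i j : ι) :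
    |LinearMap.toMatrix b b f i j| ≤ (Fintype.card ι * c) ^ 2 * K := by
  have hexpand : (N : ℤ) ^ 2 * LinearMap.toMatrix b b f i j =
      ∑ k, ∑ l, e (b j) k * e (f (v k)) l * b.repr (v l) i := by
    have h : N • N • f (b j) = ∑ k, ∑ l, (e (b j) k * e (f (v k)) l) • v l := by
      rw [← map_nsmul f, ← he (b j), map_sum, Finset.smul_sum]
      simp only [map_smul, smul_comm N, ← he (f _), Finset.smul_sum, mul_smul]
    simpa [LinearMap.toMatrix_apply, sq, mul_assoc] using congrArg (b.coord i) h
  calc |LinearMap.toMatrix b b f i j|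
      ≤ |(N : ℤ) ^ 2 * LinearMap.toMatrix b b f i j| := by
        rw [abs_mul]
        exact le_mul_of_one_le_left (abs_nonneg _) (Int.one_le_abs (by positivity))
    _ ≤ ∑ k, ∑ l, |e (b j) k * e (f (v k)) l * b.repr (v l) i| := by
        rw [hexpand]
        exact (Finset.abs_sum_le_sum_abs _ _).trans
          (Finset.sum_le_sum fun k _ ↦ Finset.abs_sum_le_sum_abs _ _)
    _ ≤ ∑ _k : ι, ∑ _l : ι, (c * K * c : ℤ) := by
        gcongr with k _ l
        rw [abs_mul, abs_mul]
        gcongr <;> simp only [hb, hb', hf]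
    _ = (Fintype.card ι * c) ^ 2 * K := by
        simp only [Finset.sum_const, Finset.card_univ, nsmul_eq_mul]
        ring

end ScaledCoordinates

section Saturation

variable {R M : Type*} [CommRing R] [IsDomain R] [AddCommGroup M] [Module R M]

/-- The vectors of `M` having a nonzero multiple in `S`: the smallest submodule containing `S` with
torsion-free quotient. -/
def saturation (S : Submodule R M) : Submodule R M :=
  (torsion R (M ⧸ S)).comap S.mkQ

theorem mem_saturation {S : Submodule R M} {x : M} :
    x ∈ saturation S ↔ ∃ k : R, k ≠ 0 ∧ k • x ∈ S := by
  simp [saturation, Submonoid.smul_def, ← Quotient.mk_smul]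

theorem le_saturation (S : Submodule R M) : S ≤ saturation S :=
  fun x hx ↦ mem_saturation.2 ⟨1, one_ne_zero, by rwa [one_smul]⟩

instance isTorsionFree_quotient_saturation (S : Submodule R M) :
    IsTorsionFree R (M ⧸ saturation S) := by
  refine .of_smul_eq_zero fun k x hk ↦ or_iff_not_imp_left.2 fun hk0 ↦ ?_
  obtain ⟨x, rfl⟩ := mkQ_surjective _ x
  rw [← map_smul, mkQ_apply, Quotient.mk_eq_zero, mem_saturation] at hk
  obtain ⟨l, hl, hlx⟩ := hk
  rw [mkQ_apply, Quotient.mk_eq_zero, mem_saturation]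
  exact ⟨l * k, mul_ne_zero hl hk0, by rwa [mul_smul]⟩

theorem saturation_le_comap {S : Submodule R M} {f : M →ₗ[R] M} (h : S ≤ S.comap f) :
    saturation S ≤ (saturation S).comap f := by
  intro x hx
  obtain ⟨k, hk, hkx⟩ := mem_saturation.1 hx
  exact mem_saturation.2 ⟨k, hk, by simpa only [mem_comap, map_smul] using h hkx⟩

theorem saturation_le_iff {S T : Submodule R M} :
    saturation S ≤ saturation T ↔ S ≤ saturation T := by
  refine ⟨(le_saturation S).trans, fun h x hx ↦ ?_⟩
  obtain ⟨k, hk, hkx⟩ := mem_saturation.1 hx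
  obtain ⟨l, hl, hlx⟩ := mem_saturation.1 (h hkx)
  exact mem_saturation.2 ⟨l * k, mul_ne_zero hl hk, by rwa [mul_smul]⟩

theorem exists_linearIndependent_saturation_span_le [IsNoetherian R M] (s : Set M) :
    ∃ (r : ℕ) (v : Fin r → M), LinearIndependent R v ∧ (∀ i, v i ∈ s) ∧
      saturation (span R s) ≤ saturation (span R (Set.range v)) := by
  obtain ⟨t, ht, hmax⟩ := exists_maximal_linearIndepOn R ((↑) : s → M)
  have := LinearIndependent.finite_of_isNoetherian ht
  obtain ⟨r, ⟨f⟩⟩ := Finite.exists_equiv_fin t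
  refine ⟨r, fun i ↦ (f.symm i : s), ht.comp _ f.symm.injective, fun i ↦ (f.symm i).1.2, ?_⟩
  have hrange : Set.range (fun i ↦ ((f.symm i : s) : M)) = (↑) '' t := by
    rw [Set.image_eq_range]
    exact f.symm.surjective.range_comp fun x : t ↦ ((x : s) : M)
  rw [hrange, saturation_le_iff, span_le]
  intro x hx
  by_cases hxt : ⟨x, hx⟩ ∈ t
  · exact le_saturation _ (subset_span ⟨⟨x, hx⟩, hxt, rfl⟩)
  · exact mem_saturation.2 (hmax ⟨x, hx⟩ hxt)

theorem saturation_span_range_eq_top {ι : Type*} {W : Submodule R M} {w : ι → W}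
    (h : W ≤ saturation (span R (Set.range fun i ↦ (w i : M)))) :
    saturation (span R (Set.range w)) = ⊤ := by
  refine eq_top_iff.2 fun x _ ↦ ?_
  obtain ⟨k, hk, hkx⟩ := mem_saturation.1 (h x.2)
  refine mem_saturation.2 ⟨k, hk, ?_⟩
  have hmap : (span R (Set.range w)).map W.subtype = span R (Set.range fun i ↦ (w i : M)) := by
    rw [map_span, ← Set.range_comp]
    rfl
  rw [← comap_map_eq_of_injective W.subtype_injective (span R (Set.range w)), hmap]
  exact hkx

end Saturation

section BoundedBasis

variable {G M : Type*} [Monoid G] [AddCommGroup M]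

/-- The lattice `M` has a `ℤ`-basis in which all matrices of the representation `ρ` have entries of
absolute value at most `C`. -/
def HasBoundedBasis (ρ : Representation ℤ G M) (C : ℕ) : Prop :=
  ∃ (n : ℕ) (b : Basis (Fin n) ℤ M), ∀ g i j, |LinearMap.toMatrix b b (ρ g) i j| ≤ C

variable {ρ : Representation ℤ G M}

theorem HasBoundedBasis.mono {C D : ℕ} (h : HasBoundedBasis ρ C) (hCD : C ≤ D) :
    HasBoundedBasis ρ D := by
  obtain ⟨n, b, hb⟩ := h
  exact ⟨n, b, fun g i j ↦ (hb g i j).trans (mod_cast hCD)⟩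

theorem hasBoundedBasis_of_basis {ι : Type*} [Fintype ι] [DecidableEq ι] (b : Basis ι ℤ M) {C : ℕ}
    (hb : ∀ g i j, |LinearMap.toMatrix b b (ρ g) i j| ≤ C) : HasBoundedBasis ρ C := by
  refine ⟨Fintype.card ι, b.reindex (Fintype.equivFin ι), fun g i j ↦ ?_⟩
  simpa [LinearMap.toMatrix_apply] using
    hb g ((Fintype.equivFin ι).symm i) ((Fintype.equivFin ι).symm j)

end BoundedBasis

section Extension

theorem abs_matrix_mul_apply_le {l m n R : Type*} [Fintype m] [CommRing R] [LinearOrder R]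
    [IsStrictOrderedRing R] {A : Matrix l m R} {B : Matrix m n R} {a b : R}
    (hA : ∀ i j, |A i j| ≤ a) (hB : ∀ i j, |B i j| ≤ b) (i : l) (j : n) :
    |(A * B) i j| ≤ Fintype.card m * (a * b) :=
  calc |(A * B) i j| ≤ ∑ k, |A i k * B k j| := Finset.abs_sum_le_sum_abs _ _
    _ ≤ ∑ _k : m, a * b := by
        gcongr with k
        rw [abs_mul]
        exact mul_le_mul (hA i k) (hB k j) (abs_nonneg _) ((abs_nonneg _).trans (hA i k))
    _ = Fintype.card m * (a * b) := by simp

-- Rounding: divide the matrix entries of `f` by `n`.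
theorem exists_eq_nsmul_add {κ ι P Q : Type*} [Fintype κ] [DecidableEq κ] [Finite ι]
    [AddCommGroup P] [AddCommGroup Q] (bP : Basis ι ℤ P) (bQ : Basis κ ℤ Q) (f : Q →ₗ[ℤ] P)
    {n : ℕ} (hn : n ≠ 0) :
    ∃ q r : Q →ₗ[ℤ] P, f = n • q + r ∧ ∀ i j, |LinearMap.toMatrix bQ bP r i j| ≤ n := by
  have := Fintype.ofFinite ι
  let A := LinearMap.toMatrix bQ bP f
  refine ⟨Matrix.toLin bQ bP (A.map (· / n)), Matrix.toLin bQ bP (A.map (· % n)), ?_, fun i j ↦ ?_⟩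
  · apply (LinearMap.toMatrix bQ bP).injective
    ext i j
    simp [A, Int.mul_ediv_add_emod]
  · rw [LinearMap.toMatrix_toLin, Matrix.map_apply, abs_of_nonneg (Int.emod_nonneg _ (mod_cast hn))]
    exact (Int.emod_lt_of_pos _ (by positivity)).le

theorem exists_basis_sum_of_section {κ ι M : Type*} [AddCommGroup M] {W : Submodule ℤ M}
    (bW : Basis ι ℤ W) (bQ : Basis κ ℤ (M ⧸ W)) {s : (M ⧸ W) →ₗ[ℤ] M} (hs : W.mkQ ∘ₗ s = .id) :
    ∃ b : Basis (ι ⊕ κ) ℤ M, (∀ i, b (.inl i) = bW i) ∧ (∀ j, b (.inr j) = s (bQ j)) ∧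
      ∀ (w : W) q, (∀ i, b.repr (w + s q) (.inl i) = bW.repr w i) ∧
        ∀ j, b.repr (w + s q) (.inr j) = bQ.repr q j := by
  let e : M ≃ₗ[ℤ] W × (M ⧸ W) := (Function.Exact.splitSurjectiveEquiv
    (LinearMap.exact_subtype_mkQ W) W.injective_subtype ⟨s, hs⟩).1
  have e_symm (w : W) (q : M ⧸ W) : e.symm (w, q) = w + s q := rfl
  have e_apply (w : W) (q : M ⧸ W) : e (w + s q) = (w, q) := by
    rw [← e_symm, e.apply_symm_apply]
  refine ⟨(bW.prod bQ).map e.symm, fun i ↦ ?_, fun j ↦ ?_, fun w q ↦ ⟨fun i ↦ ?_, fun j ↦ ?_⟩⟩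
  · simp [Basis.prod_apply, e_symm]
  · simp [Basis.prod_apply, e_symm]
  · simp [e_apply]
  · simp [e_apply]

variable {G M : Type*} [Group G] [AddCommGroup M]
  {ρ : Representation ℤ G M} {W : Submodule ℤ M} {hW : ∀ g, W ≤ W.comap (ρ g)}

-- Average an arbitrary linear section of the projection.
theorem exists_equivariant_mkQ_eq_card_smul [Fintype G] [Free ℤ (M ⧸ W)] :
    ∃ σ : (M ⧸ W) →ₗ[ℤ] M, (∀ q, W.mkQ (σ q) = Fintype.card G • q) ∧
      ∀ g q, σ (ρ.quotient W hW g q) = ρ g (σ q) := by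
  obtain ⟨s, hs⟩ := projective_lifting_property W.mkQ .id W.mkQ_surjective
  have hs_apply (q : M ⧸ W) : W.mkQ (s q) = q := LinearMap.congr_fun hs q
  let τ := Representation.linHom (ρ.quotient W hW) ρ
  refine ⟨τ.norm s, fun q ↦ ?_, fun g q ↦ ?_⟩
  · have hτ (g : G) : W.mkQ (τ g s q) = q :=
      calc W.mkQ (ρ g (s (ρ.quotient W hW g⁻¹ q)))
          = ρ.quotient W hW g (W.mkQ (s (ρ.quotient W hW g⁻¹ q))) := rfl
        _ = q := by rw [hs_apply, Representation.self_inv_apply]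
    simp only [Representation.norm, LinearMap.sum_apply, map_sum, hτ, Finset.sum_const,
      Finset.card_univ]
  · have hτ : τ.norm s (ρ.quotient W hW g q) = ρ g (τ.norm s
      (ρ.quotient W hW g⁻¹ (ρ.quotient W hW g q))) :=
      LinearMap.congr_fun (τ.self_norm_apply g s).symm _
    rw [hτ, Representation.inv_self_apply]

-- Round the deviation of an equivariant lift of `|G|` from `|G|` times a section.
theorem exists_section_of_basis [Fintype G] {κ ι : Type*} [Fintype κ] [DecidableEq κ] [Finite ι]
    (bW : Basis ι ℤ W) (bQ : Basis κ ℤ (M ⧸ W)) :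
    ∃ (s : (M ⧸ W) →ₗ[ℤ] M) (r : (M ⧸ W) →ₗ[ℤ] W), W.mkQ ∘ₗ s = .id ∧
      (∀ i j, |LinearMap.toMatrix bQ bW r i j| ≤ Fintype.card G) ∧
      ∀ g q, Fintype.card G • (ρ g (s q) - s (ρ.quotient W hW g q)) =
        r (ρ.quotient W hW g q) - ρ.subrepresentation W hW g (r q) := by
  have : Free ℤ (M ⧸ W) := .of_basis bQ
  obtain ⟨s, hs⟩ := projective_lifting_property W.mkQ .id W.mkQ_surjective
  obtain ⟨σ, hσ, hσ'⟩ := exists_equivariant_mkQ_eq_card_smul (ρ := ρ) (hW := hW)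
  have hs_apply (q : M ⧸ W) : W.mkQ (s q) = q := LinearMap.congr_fun hs q
  let z : (M ⧸ W) →ₗ[ℤ] W := (σ - Fintype.card G • s).codRestrict W fun q ↦ by
    rw [← Quotient.mk_eq_zero, ← mkQ_apply, LinearMap.sub_apply, map_sub, hσ, LinearMap.smul_apply,
      map_nsmul, hs_apply, sub_self]
  obtain ⟨t, r, hz, hr⟩ := exists_eq_nsmul_add bW bQ z (Fintype.card_ne_zero (α := G))
  have σ_apply (q : M ⧸ W) : σ q = Fintype.card G • (s q + t q) + r q := by
    have : σ q - Fintype.card G • s q = Fintype.card G • (t q : M) + r q :=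
      congrArg Subtype.val (LinearMap.congr_fun hz q)
    rw [smul_add, add_assoc, ← this, add_sub_cancel]
  refine ⟨s + W.subtype ∘ₗ t, r, ?_, hr, fun g q ↦ ?_⟩
  · rw [LinearMap.comp_add, hs, ← LinearMap.comp_assoc,
      (LinearMap.exact_subtype_mkQ W).linearMap_comp_eq_zero, LinearMap.zero_comp, add_zero]
  · have h := hσ' g q
    rw [σ_apply, σ_apply, map_add, map_nsmul] at h
    simp only [LinearMap.add_apply, LinearMap.comp_apply, subtype_apply, smul_sub,
      Representation.subrepresentation_apply, LinearMap.coe_restrict_apply]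
    rw [sub_eq_sub_iff_add_eq_add, ← h]
    abel

theorem exists_section_forall_abs_repr_le [Finite G] {κ ι : Type*} [Fintype κ] [DecidableEq κ]
    [Fintype ι] [DecidableEq ι] (bW : Basis ι ℤ W) (bQ : Basis κ ℤ (M ⧸ W)) {C : ℤ}
    (hbW : ∀ g i j, |LinearMap.toMatrix bW bW (ρ.subrepresentation W hW g) i j| ≤ C)
    (hbQ : ∀ g i j, |LinearMap.toMatrix bQ bQ (ρ.quotient W hW g) i j| ≤ C) :
    ∃ (s : (M ⧸ W) →ₗ[ℤ] M) (β : G → (M ⧸ W) → W), W.mkQ ∘ₗ s = .id ∧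
      (∀ g q, ρ g (s q) = β g q + s (ρ.quotient W hW g q)) ∧
      ∀ g i j, |bW.repr (β g (bQ j)) i| ≤ (Fintype.card ι + Fintype.card κ) * C := by
  have := Fintype.ofFinite G
  obtain ⟨s, r, hs, hr, hsr⟩ := exists_section_of_basis (ρ := ρ) (hW := hW) bW bQ
  have mem (g : G) (q : M ⧸ W) : ρ g (s q) - s (ρ.quotient W hW g q) ∈ W := by
    rw [← Quotient.mk_eq_zero, ← mkQ_apply, map_sub, sub_eq_zero]
    exact (congrArg (ρ.quotient W hW g) (LinearMap.congr_fun hs q)).trans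
      (LinearMap.congr_fun hs _).symm
  let β (g : G) (q : M ⧸ W) : W := ⟨_, mem g q⟩
  refine ⟨s, β, hs, fun g q ↦ (sub_add_cancel _ _).symm, fun g i j ↦ ?_⟩
  let S := LinearMap.toMatrix bW bW (ρ.subrepresentation W hW g)
  let T := LinearMap.toMatrix bQ bQ (ρ.quotient W hW g)
  let R := LinearMap.toMatrix bQ bW r
  have hβ : Fintype.card G * bW.repr (β g (bQ j)) i = (R * T) i j - (S * R) i j := by
    have : Fintype.card G • β g (bQ j) =
        (r ∘ₗ ρ.quotient W hW g - ρ.subrepresentation W hW g ∘ₗ r) (bQ j) :=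
      Subtype.ext (hsr g (bQ j))
    rw [← LinearMap.toMatrix_comp, ← LinearMap.toMatrix_comp, ← Matrix.sub_apply, ← map_sub,
      LinearMap.toMatrix_apply, ← this, map_nsmul, Finsupp.smul_apply, nsmul_eq_mul]
  have hG : (0 : ℤ) < Fintype.card G := by exact_mod_cast Fintype.card_pos
  refine le_of_mul_le_mul_left ?_ hG
  calc Fintype.card G * |bW.repr (β g (bQ j)) i|
      = |(R * T) i j - (S * R) i j| := by rw [← hβ, abs_mul, Nat.abs_cast]
    _ ≤ |(R * T) i j| + |(S * R) i j| := abs_sub _ _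
    _ ≤ Fintype.card κ * (Fintype.card G * C) + Fintype.card ι * (C * Fintype.card G) :=
        add_le_add (abs_matrix_mul_apply_le hr (hbQ g) i j) (abs_matrix_mul_apply_le (hbW g) hr i j)
    _ = Fintype.card G * ((Fintype.card ι + Fintype.card κ) * C) := by ring

theorem HasBoundedBasis.of_subrepresentation_quotient [Finite G] {C : ℕ}
    (h : HasBoundedBasis (ρ.subrepresentation W hW) C) (h' : HasBoundedBasis (ρ.quotient W hW) C) :
    HasBoundedBasis ρ ((finrank ℤ M + 1) * C) := by
  obtain ⟨m, bW, hbW⟩ := h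
  obtain ⟨k, bQ, hbQ⟩ := h'
  obtain ⟨s, β, hs, hsβ, hβ⟩ := exists_section_forall_abs_repr_le bW bQ hbW hbQ
  obtain ⟨b, b_inl, b_inr, hb⟩ := exists_basis_sum_of_section bW bQ hs
  have hfinrank : finrank ℤ M = m + k := by
    simp [finrank_eq_card_basis b]
  have b_inl_image (g : G) (j : Fin m) :
      ρ g (b (.inl j)) = ρ.subrepresentation W hW g (bW j) + s 0 := by
    simp [b_inl]
  have hC : (C : ℤ) ≤ ((m + k + 1) * C : ℕ) := by
    exact_mod_cast Nat.le_mul_of_pos_left C (by positivity)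
  refine hasBoundedBasis_of_basis b fun g ↦ ?_
  rw [hfinrank]
  simp only [LinearMap.toMatrix_apply]
  rintro (i | i) (j | j)
  · rw [b_inl_image, (hb _ _).1, ← LinearMap.toMatrix_apply]
    exact (hbW g i j).trans hC
  · rw [b_inr, hsβ, (hb _ _).1]
    refine (hβ g i j).trans ?_
    push_cast
    rw [Fintype.card_fin, Fintype.card_fin]
    exact mul_le_mul_of_nonneg_right (by lia) (Nat.cast_nonneg C)
  · rw [b_inl_image, (hb _ _).2, map_zero, Finsupp.zero_apply, abs_zero]
    positivity
  · rw [b_inr, hsβ, (hb _ _).2, ← LinearMap.toMatrix_apply]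
    exact (hbQ g i j).trans hC

end Extension

section Induction

theorem exists_forall_hasBoundedBasis_of_isShortest (G : Type*) [Group G] (r : ℕ) :
    ∃ C : ℕ, ∀ {M : Type*} [AddCommGroup M] [IsTorsionFree ℤ M] (ρ : Representation ℤ G M)
      (p : Seminorm ℤ M), (∀ x, x ≠ 0 → 0 < p x) → (∀ g x, p (ρ g x) = p x) →
      ∀ v : Fin r → M, LinearIndependent ℤ v → (∀ i, IsShortest p (v i)) →
      saturation (span ℤ (Set.range v)) = ⊤ → HasBoundedBasis ρ C := by
  obtain ⟨c, hc⟩ :=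
    exists_forall_exists_basis_of_scaled_coordinates (Fin r) (spanExponent_ne_zero r)
  refine ⟨(r * c) ^ 2 * spanExponent r ^ 2, fun ρ p hp hinv v hli hv htop ↦ ?_⟩
  have hN (x) : spanExponent r • x ∈ span ℤ (Set.range v) := by
    obtain ⟨k, hk, hkx⟩ := mem_saturation.1 (htop ▸ mem_top (x := x))
    simpa only [Fintype.card_fin] using spanExponent_smul_mem_span hp hv hk hkx
  obtain ⟨e, he⟩ := exists_scaled_coordinates hli hN
  obtain ⟨b, hb, hb'⟩ := hc hli e he
  have hρv (g : G) (j : Fin r) : IsShortest p (ρ g (v j)) :=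
    (hv j).map (ρ.apply_bijective g).1 (hinv g (v j))
  have hρe (g : G) (i j : Fin r) : |e (ρ g (v j)) i| ≤ (spanExponent r ^ 2 : ℕ) := by
    simpa using abs_coord_le_spanExponent_sq hp hv hli (hρv g j)
      (by simpa only [Fintype.card_fin] using he (ρ g (v j))) i
  refine ⟨r, b, fun g i j ↦ ?_⟩
  simpa using abs_toMatrix_le_of_scaled_coordinates (spanExponent_ne_zero r) he hb hb' (hρe g) i j

theorem exists_forall_exists_hasBoundedBasis_subrepresentation (G : Type*) [Group G] [Finite G]
    (n : ℕ) :
    ∃ C : ℕ, ∀ {M : Type*} [AddCommGroup M] [Module.Finite ℤ M] [Free ℤ M] [Nontrivial M]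
      (ρ : Representation ℤ G M), finrank ℤ M ≤ n →
      ∃ (W : Submodule ℤ M) (hW : ∀ g, W ≤ W.comap (ρ g)), W ≠ ⊥ ∧ IsTorsionFree ℤ (M ⧸ W) ∧
        HasBoundedBasis (ρ.subrepresentation W hW) C := by
  have := Fintype.ofFinite G
  choose C hC using exists_forall_hasBoundedBasis_of_isShortest G
  refine ⟨(Finset.range (n + 1)).sup C, fun {M} _ _ _ _ ρ hn ↦ ?_⟩
  let p := orbitSeminorm ρ (finBasis ℤ M)
  let S := span ℤ {x | IsShortest p x}
  have hS (g : G) : S ≤ S.comap (ρ g) := span_le.2 fun x hx ↦ subset_span <|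
    IsShortest.map hx (ρ.apply_bijective g).1 (orbitSeminorm_apply_rho ρ _ g x)
  obtain ⟨x, hx⟩ := exists_isShortest_orbitSeminorm ρ (finBasis ℤ M)
  obtain ⟨r, v, hli, hv, hle⟩ :=
    exists_linearIndependent_saturation_span_le (R := ℤ) {x | IsShortest p x}
  refine ⟨saturation S, fun g ↦ saturation_le_comap (hS g), ?_, inferInstance, ?_⟩
  · exact (Submodule.ne_bot_iff _).2 ⟨x, le_saturation S (subset_span hx), hx.1⟩
  let w (i : Fin r) : saturation S := ⟨v i, le_saturation S (subset_span (hv i))⟩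
  have hr : r ∈ Finset.range (n + 1) := by
    have := hli.fintype_card_le_finrank
    rw [Fintype.card_fin] at this
    exact Finset.mem_range.2 (by lia)
  refine (hC r _ (p.comp (saturation S).subtype) ?_ ?_ w ?_ ?_ ?_).mono (Finset.le_sup hr)
  · exact fun y hy ↦ orbitSeminorm_pos ρ _ (by simpa using hy)
  · exact fun g y ↦ orbitSeminorm_apply_rho ρ _ g y
  · exact .of_comp (saturation S).subtype hli
  · exact fun i ↦ IsShortest.comp_subtype (hv i)
  · exact saturation_span_range_eq_top hle

theorem exists_forall_hasBoundedBasis (G : Type*) [Group G] [Finite G] (n : ℕ) :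
    ∃ C : ℕ, ∀ {M : Type*} [AddCommGroup M] [Module.Finite ℤ M] [Free ℤ M]
      (ρ : Representation ℤ G M), finrank ℤ M ≤ n → HasBoundedBasis ρ C := by
  induction n with
  | zero =>
    refine ⟨0, fun {M} _ _ _ ρ hM ↦ ⟨0, finBasisOfFinrankEq ℤ M (Nat.le_zero.1 hM), ?_⟩⟩
    exact fun _ i ↦ i.elim0
  | succ n ih =>
    obtain ⟨C, hC⟩ := ih
    obtain ⟨D, hD⟩ := exists_forall_exists_hasBoundedBasis_subrepresentation G (n + 1)
    refine ⟨(n + 2) * max C D, fun {M} _ _ _ ρ hM ↦ ?_⟩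
    obtain hMn | hMn := Nat.le_or_eq_of_le_succ hM
    · exact (hC ρ hMn).mono ((le_max_left C D).trans (Nat.le_mul_of_pos_left _ (by lia)))
    have := nontrivial_of_finrank_pos (hMn ▸ n.succ_pos)
    obtain ⟨W, hW, hW_ne, _, hWD⟩ := hD ρ hM
    have hquot : finrank ℤ (M ⧸ W) ≤ n := by
      have := (nontrivial_iff_ne_bot).2 hW_ne
      have := W.finrank_quotient_add_finrank
      have : 0 < finrank ℤ W := finrank_pos
      lia
    have h := (hWD.mono (le_max_right C D)).of_subrepresentation_quotient
      ((hC (ρ.quotient W hW) hquot).mono (le_max_left C D))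
    rwa [hMn] at h

end Induction

section Matrices

theorem finite_setOf_forall_abs_apply_le (G n : Type*) [Monoid G] [Finite G] [Fintype n]
    [DecidableEq n] (C : ℤ) :
    {ρ : G →* GL n ℤ | ∀ g i j, |(ρ g : Matrix n n ℤ) i j| ≤ C}.Finite := by
  let entries (ρ : G →* GL n ℤ) (g : G) (i j : n) : ℤ := (ρ g : Matrix n n ℤ) i j
  have entries_injective : Function.Injective entries := fun ρ ρ' h ↦ by
    ext g i j
    exact congrFun₃ h g i j
  have : {f : G → n → n → ℤ | ∀ g, f g ∈ {A | ∀ i, A i ∈ {r | ∀ j, r j ∈ Set.Icc (-C) C}}}.Finite :=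
    .pi' fun _ ↦ .pi' fun _ ↦ .pi' fun _ ↦ Set.finite_Icc _ _
  exact (this.preimage entries_injective.injOn).subset fun ρ hρ g i j ↦ abs_le.1 (hρ g i j)

theorem exists_toMatrix_toLin'_eq_conj {n R : Type*} [Fintype n] [DecidableEq n] [CommRing R]
    (b : Basis n R (n → R)) :
    ∃ P : GL n R, ∀ A : Matrix n n R,
      LinearMap.toMatrix b b (Matrix.toLin' A) = (P⁻¹ : GL n R) * A * P := by
  let e := Pi.basisFun R n
  refine ⟨⟨e.toMatrix b, b.toMatrix e, e.toMatrix_mul_toMatrix_flip b,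
    b.toMatrix_mul_toMatrix_flip e⟩, fun A ↦ ?_⟩
  have hA : LinearMap.toMatrix e e (Matrix.toLin' A) = A := LinearMap.toMatrix'_toLin' A
  rw [← basis_toMatrix_mul_linearMap_toMatrix_mul_basis_toMatrix b e b e, hA]
  rfl

end Matrices

end JordanZassenhaus

open JordanZassenhaus

/-- Theorem 2.1 (Jordan–Zassenhaus type finiteness): for every finite group `G` and every
positive integer `d`, there are only finitely many integral representations
`G → GL_d(ℤ)` of dimension `d` up to conjugacy in `GL_d(ℤ)`. -/
theorem finitely_many_integral_representations
    (G : Type*) [Group G] [Finite G] (d : ℕ) (hd : 0 < d) :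
    ∃ R : Finset (G →* Matrix.GeneralLinearGroup (Fin d) ℤ),
      ∀ ρ : G →* Matrix.GeneralLinearGroup (Fin d) ℤ,
        ∃ ρ' ∈ R, ∃ P : Matrix.GeneralLinearGroup (Fin d) ℤ,
          ∀ g : G, ρ g = P * ρ' g * P⁻¹ := by
  obtain ⟨C, hC⟩ := exists_forall_hasBoundedBasis G d
  refine ⟨(finite_setOf_forall_abs_apply_le G (Fin d) C).toFinset, fun ρ ↦ ?_⟩
  let τ : Representation ℤ G (Fin d → ℤ) :=
    (Matrix.toLinAlgEquiv' (R := ℤ)).toMonoidHom.comp ((Units.coeHom _).comp ρ)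
  obtain ⟨n, b, hb⟩ := hC τ (by simp)
  obtain rfl : n = d := by simpa using (finrank_eq_card_basis b).symm
  obtain ⟨P, hP⟩ := exists_toMatrix_toLin'_eq_conj b
  refine ⟨(MulAut.conj P⁻¹).toMonoidHom.comp ρ, ?_, P, fun g ↦ ?_⟩
  · rw [Set.Finite.mem_toFinset]
    intro g i j
    exact (congrArg (|· i j|) (hP (ρ g))).symm.trans_le (hb g i j)
  · simp [mul_assoc]
end

section
/- Let G be a finite group and ρ : G → GL_d(ℤ) a group homomorphism, viewed as an action of G on the lattice ℤ^d ⊂ ℝ^d. Then there exists a positive-definite symmetric bilinear form ⟨·,·⟩ on ℝ^d which is G-invariant (i.e. ⟨ρ(g)x, ρ(g)y⟩ = ⟨x,y⟩ for all g ∈ G and x,y ∈ ℝ^d) and such that the set of nonzero vectors of ℤ^d of minimal norm with respect to ⟨·,·⟩ spans ℝ^d over ℝ. -/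
/-! Let `V` be an invariant subspace spanned by lattice vectors of norm `1`, such that no nonzero
lattice vector in `V` is shorter. Leave the form unchanged on `V` and multiply it by `s > 0` on the
orthogonal complement of `V`, with `s` as small as possible subject to no nonzero lattice vector
having norm below `1`. The form stays invariant, and the lattice vectors outside `V` that now have
norm `1` enlarge `V`. A positive least `s` exists because some lattice vector outside `V` projects
to a vector of norm less than `1` in `V`: otherwise the projection would map the lattice injectively
onto a discrete subgroup, whose rank would exceed the dimension of `V`. Starting from `V = 0`, this
ends with `V` the whole space. -/

open LinearMap Module Submodule
open LinearMap (BilinForm)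

section NormedSpace

variable {E : Type*} [NormedAddCommGroup E] [NormedSpace ℝ E] [FiniteDimensional ℝ E]

theorem exists_mem_lattice_norm_map_lt {F : Type*} [NormedAddCommGroup F] [NormedSpace ℝ F]
    [FiniteDimensional ℝ F] (L : Submodule ℤ E) [DiscreteTopology L] [IsZLattice ℝ L]
    (T : E →ₗ[ℝ] F) (hT : finrank ℝ (range T) < finrank ℝ E) {ε : ℝ} (hε : 0 < ε) :
    ∃ x ∈ L, x ≠ 0 ∧ ‖T x‖ < ε := by
  by_contra! h
  let f : L →ₗ[ℤ] F := T.restrictScalars ℤ ∘ₗ L.subtype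
  have hf : ∀ x : L, x ≠ 0 → ε ≤ ‖f x‖ := fun x hx => h x x.2 (by simpa using hx)
  have hf_inj : Function.Injective f := by
    rw [← LinearMap.ker_eq_bot, LinearMap.ker_eq_bot']
    intro x hx
    by_contra hx0
    have := hf x hx0
    rw [hx, norm_zero] at this
    exact this.not_gt hε
  have hf_discrete : DiscreteTopology (range f) := by
    refine discreteTopology_of_isOpen_singleton_zero (Metric.isOpen_singleton_iff.2 ⟨ε, hε, ?_⟩)
    rintro ⟨_, x, rfl⟩ hx
    by_contra hx0
    refine (hf x fun h0 => hx0 ?_).not_gt (by simpa using hx)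
    simp [h0]
  have hspan : span ℤ (Set.range f) = range f := span_eq (range f)
  have hrank : Set.finrank ℝ (Set.range f) = finrank ℝ E := by
    rw [Real.finrank_eq_int_finrank_of_discrete (by rwa [hspan]), Set.finrank, hspan,
      LinearMap.finrank_range_of_inj hf_inj, ZLattice.rank ℝ L]
  have hle : span ℝ (Set.range f) ≤ range T :=
    span_le.2 (by rintro _ ⟨x, rfl⟩; exact ⟨x, rfl⟩)
  exact (hrank.symm.trans_le (finrank_mono hle)).not_gt hT

theorem continuous_bilinForm_apply_self (B : BilinForm ℝ E) : Continuous fun x => B x x :=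
  B.toContinuousBilinearMap.continuous.clm_apply continuous_id

theorem exists_mul_norm_sq_le_apply_self {B : BilinForm ℝ E} (hB : ∀ x ≠ 0, 0 < B x x) :
    ∃ c > 0, ∀ x, c * ‖x‖ ^ 2 ≤ B x x := by
  cases subsingleton_or_nontrivial E with
  | inl _ => exact ⟨1, one_pos, fun x => by simp [Subsingleton.elim x 0]⟩
  | inr _ =>
    obtain ⟨y, hy, hy_min⟩ := (isCompact_sphere (0 : E) 1).exists_isMinOn
      (NormedSpace.sphere_nonempty.2 zero_le_one) (continuous_bilinForm_apply_self B).continuousOn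
    refine ⟨B y y, hB y (ne_zero_of_mem_unit_sphere ⟨y, hy⟩), fun x => ?_⟩
    rcases eq_or_ne x 0 with rfl | hx
    · simp
    have hx_unit : ‖x‖⁻¹ • x ∈ Metric.sphere (0 : E) 1 := by
      simp [norm_smul, hx]
    calc B y y * ‖x‖ ^ 2 ≤ B (‖x‖⁻¹ • x) (‖x‖⁻¹ • x) * ‖x‖ ^ 2 := by
          gcongr
          exact hy_min hx_unit
      _ = B x x := by
          simp only [map_smul, LinearMap.smul_apply, smul_eq_mul]
          field_simp [norm_ne_zero_iff.2 hx]

theorem finite_setOf_mem_lattice_apply_self_le {B : BilinForm ℝ E} (hB : ∀ x ≠ 0, 0 < B x x)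
    (L : Submodule ℤ E) [DiscreteTopology L] (C : ℝ) : {x | x ∈ L ∧ B x x ≤ C}.Finite := by
  obtain ⟨c, hc, hcB⟩ := exists_mul_norm_sq_le_apply_self hB
  have : DiscreteTopology L.toAddSubgroup := ‹DiscreteTopology L›
  refine (Metric.finite_isBounded_inter_isClosed (K := Metric.closedBall 0 √(C / c))
    (s := (L : Set E)) DiscreteTopology.isDiscrete Metric.isBounded_closedBall
    (AddSubgroup.isClosed_of_discrete (H := L.toAddSubgroup))).subset ?_
  rintro x ⟨hxL, hx⟩
  refine ⟨mem_closedBall_zero_iff.2 (Real.le_sqrt_of_sq_le ?_), hxL⟩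
  rw [le_div_iff₀' hc]
  exact (hcB x).trans hx

end NormedSpace

section InvariantForms

variable {E : Type*} [AddCommGroup E] [Module ℝ E]

/-- The form that agrees with `B` on the range of the projection `π`, with `s • B` on its kernel,
and makes the two orthogonal. -/
def rescaleKer (B : BilinForm ℝ E) (π : End ℝ E) (s : ℝ) : BilinForm ℝ E :=
  B.compl₁₂ π π + s • B.compl₁₂ (1 - π) (1 - π)

theorem rescaleKer_apply (B : BilinForm ℝ E) (π : End ℝ E) (s : ℝ) (x y : E) :
    rescaleKer B π s x y = B (π x) (π y) + s * B (x - π x) (y - π y) := rfl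

theorem rescaleKer_apply_self_of_mem {V : Submodule ℝ E} {π : End ℝ E} (hπ : IsProj V π)
    (B : BilinForm ℝ E) (s : ℝ) {x : E} (hx : x ∈ V) : rescaleKer B π s x x = B x x := by
  simp [rescaleKer_apply, hπ.map_id x hx]

theorem rescaleKer_apply_self_pos {B : BilinForm ℝ E} (hB : ∀ x ≠ 0, 0 < B x x)
    (π : End ℝ E) {s : ℝ} (hs : 0 < s) (x : E) (hx : x ≠ 0) : 0 < rescaleKer B π s x x := by
  have hB_nonneg : ∀ y, 0 ≤ B y y := fun y => by
    rcases eq_or_ne y 0 with rfl | hy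
    · simp
    · exact (hB y hy).le
  rw [rescaleKer_apply]
  rcases eq_or_ne (π x) 0 with h | h
  · simpa [h] using mul_pos hs (hB x hx)
  · exact add_pos_of_pos_of_nonneg (hB _ h) (mul_nonneg hs.le (hB_nonneg _))

/-- The value of `s` at which `rescaleKer B π s` takes the value `1` on `x`; it is `0` by the
convention on division by zero if `B` vanishes on `x - π x`. -/
noncomputable def criticalScale (B : BilinForm ℝ E) (π : End ℝ E) (x : E) : ℝ :=
  (1 - B (π x) (π x)) / B (x - π x) (x - π x)

theorem criticalScale_le_iff {B : BilinForm ℝ E} {π : End ℝ E} {x : E}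
    (hx : 0 < B (x - π x) (x - π x)) {s : ℝ} :
    criticalScale B π x ≤ s ↔ 1 ≤ rescaleKer B π s x x := by
  rw [criticalScale, div_le_iff₀ hx, rescaleKer_apply, sub_le_iff_le_add']

theorem le_criticalScale_iff {B : BilinForm ℝ E} {π : End ℝ E} {x : E}
    (hx : 0 < B (x - π x) (x - π x)) {s : ℝ} :
    s ≤ criticalScale B π x ↔ rescaleKer B π s x x ≤ 1 := by
  rw [criticalScale, le_div_iff₀ hx, rescaleKer_apply, le_sub_iff_add_le']

/-- `B` is an inner product on `E` for which every element of `Γ` is an isometry. -/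
structure IsInvariantInnerProduct (Γ : Subgroup (GeneralLinearGroup ℝ E)) (B : BilinForm ℝ E) :
    Prop where
  isSymm : B.IsSymm
  pos : ∀ x ≠ 0, 0 < B x x
  map_map : ∀ g ∈ Γ, ∀ x y, B ((g : End ℝ E) x) ((g : End ℝ E) y) = B x y

variable {Γ : Subgroup (GeneralLinearGroup ℝ E)} {B : BilinForm ℝ E} {L : Submodule ℤ E}
  {V : Submodule ℝ E}

theorem exists_isInvariantInnerProduct [FiniteDimensional ℝ E]
    (Γ : Subgroup (GeneralLinearGroup ℝ E)) [Finite Γ] :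
    ∃ B, IsInvariantInnerProduct Γ B := by
  have := Fintype.ofFinite Γ
  let τ (g : Γ) : E →ₗ[ℝ] Fin (finrank ℝ E) → ℝ := (finBasis ℝ E).equivFun ∘ₗ g.1.1
  have hτ : ∀ g x, x ≠ 0 → τ g x ≠ 0 := fun g x hx =>
    (map_ne_zero_iff _ (finBasis ℝ E).equivFun.injective).2
      ((map_ne_zero_iff _ (GeneralLinearGroup.toLinearEquiv g.1).injective).2 hx)
  let B : BilinForm ℝ E := ∑ g : Γ, (dotProductBilin ℝ ℝ).compl₁₂ (τ g) (τ g)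
  have hB : ∀ x y, B x y = ∑ g : Γ, τ g x ⬝ᵥ τ g y := fun x y => by
    simp [B, LinearMap.sum_apply]
  refine ⟨B, ⟨fun x y => ?_⟩, fun x hx => ?_, fun g hg x y => ?_⟩
  · simp only [hB, dotProduct_comm]
  · rw [hB]
    exact Finset.sum_pos (fun g _ => Matrix.dotProduct_star_self_pos_iff.2 (hτ g x hx))
      Finset.univ_nonempty
  · rw [hB, hB]
    exact Equiv.sum_comp (Equiv.mulRight (⟨g, hg⟩ : Γ)) fun h => τ h x ⬝ᵥ τ h y

namespace IsInvariantInnerProduct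

protected theorem rescaleKer (hB : IsInvariantInnerProduct Γ B) {π : End ℝ E}
    (hπ : ∀ g ∈ Γ, Commute π (g : End ℝ E)) {s : ℝ} (hs : 0 < s) :
    IsInvariantInnerProduct Γ (rescaleKer B π s) where
  isSymm := ⟨fun x y => by
    simp only [rescaleKer_apply, hB.isSymm.eq (π x) (π y),
      hB.isSymm.eq (x - π x) (y - π y)]⟩
  pos := rescaleKer_apply_self_pos hB.pos π hs
  map_map g hg x y := by
    have hπg : ∀ z, π ((g : End ℝ E) z) = (g : End ℝ E) (π z) := LinearMap.congr_fun (hπ g hg)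
    simp only [rescaleKer_apply, hπg, ← map_sub, hB.map_map g hg]

theorem orthogonal_mem_invtSubmodule (hB : IsInvariantInnerProduct Γ B)
    (hV : ∀ g ∈ Γ, V ∈ End.invtSubmodule (g : End ℝ E)) :
    ∀ g ∈ Γ, B.orthogonal V ∈ End.invtSubmodule (g : End ℝ E) := by
  intro g hg x hx v hv
  have hgv : (↑g⁻¹ : End ℝ E) v ∈ V := hV g⁻¹ (inv_mem hg) hv
  have := hB.map_map g⁻¹ (inv_mem hg) v ((g : End ℝ E) x)
  rw [← End.mul_apply, ← Units.val_mul, inv_mul_cancel] at this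
  exact this.symm.trans (hx _ hgv)

theorem exists_isProj_commute [FiniteDimensional ℝ E] (hB : IsInvariantInnerProduct Γ B)
    (hV : ∀ g ∈ Γ, V ∈ End.invtSubmodule (g : End ℝ E)) :
    ∃ π : End ℝ E, IsProj V π ∧ ∀ g ∈ Γ, Commute π (g : End ℝ E) := by
  have hcompl : IsCompl V (B.orthogonal V) := by
    rw [LinearMap.BilinForm.isCompl_orthogonal_iff_disjoint hB.isSymm.isRefl, disjoint_def]
    intro x hxV hx
    by_contra hx0
    exact (hB.pos x hx0).ne' (hx x hxV)
  refine ⟨V.projection _ hcompl, ⟨projection_apply_mem hcompl,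
    fun x hx => projection_apply_left hcompl ⟨x, hx⟩⟩, fun g hg => ?_⟩
  rw [(isIdempotentElem_projection hcompl).commute_iff, range_projection, ker_projection]
  exact ⟨hV g hg, hB.orthogonal_mem_invtSubmodule hV g hg⟩

theorem span_norm_one_mem_invtSubmodule (hB : IsInvariantInnerProduct Γ B)
    (hL : ∀ g ∈ Γ, ∀ x ∈ L, (g : End ℝ E) x ∈ L) :
    ∀ g ∈ Γ, span ℝ {x | x ∈ L ∧ B x x = 1} ∈ End.invtSubmodule (g : End ℝ E) := by
  intro g hg
  refine span_le.2 fun x ⟨hxL, hx⟩ => subset_span ⟨hL g hg x hxL, ?_⟩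
  rw [hB.map_map g hg, hx]

end IsInvariantInnerProduct

/-- The lattice `L ∩ V` is well-rounded with minimum `1`: the nonzero vectors of `L ∩ V` have
`B`-norm at least `1`, and those of norm `1` span `V`. -/
structure IsWellRoundedOn (L : Submodule ℤ E) (B : BilinForm ℝ E) (V : Submodule ℝ E) : Prop where
  one_le : ∀ x ∈ L, x ∈ V → x ≠ 0 → 1 ≤ B x x
  le_span : V ≤ span ℝ {x | x ∈ L ∧ x ∈ V ∧ B x x = 1}

/-- The nonzero vectors of `L` of least `B`-norm. -/
def minimalVectors (L : Submodule ℤ E) (B : BilinForm ℝ E) : Set E :=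
  {x | x ∈ L ∧ x ≠ 0 ∧ ∀ y ∈ L, y ≠ 0 → B x x ≤ B y y}

theorem IsWellRoundedOn.span_minimalVectors (hB : IsWellRoundedOn L B ⊤) :
    span ℝ (minimalVectors L B) = ⊤ := by
  refine eq_top_iff.2 (hB.le_span.trans (span_mono ?_))
  rintro x ⟨hxL, -, hx⟩
  refine ⟨hxL, ?_, fun y hyL hy0 => hx.trans_le (hB.one_le y hyL mem_top hy0)⟩
  rintro rfl
  simp at hx

end InvariantForms

section Lattice

variable {E : Type*} [NormedAddCommGroup E] [NormedSpace ℝ E] [FiniteDimensional ℝ E]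
  {L : Submodule ℤ E} [DiscreteTopology L] [IsZLattice ℝ L]

theorem exists_rescaleKer_min_eq_one {B : BilinForm ℝ E} (hB : ∀ x ≠ 0, 0 < B x x)
    {V : Submodule ℝ E} (hV : V ≠ ⊤)
    (hBV : ∀ x ∈ L, x ∈ V → x ≠ 0 → 1 ≤ B x x) {π : End ℝ E} (hπ : IsProj V π) :
    ∃ s > 0, (∀ x ∈ L, x ≠ 0 → 1 ≤ rescaleKer B π s x x) ∧
      ∃ x ∈ L, x ∉ V ∧ rescaleKer B π s x x = 1 := by
  have hker : ∀ x ∉ V, 0 < B (x - π x) (x - π x) := fun x hx =>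
    hB _ fun h => hx (hπ.mem_iff_map_id.2 (sub_eq_zero.1 h).symm)
  obtain ⟨w, hwL, hwV, hw⟩ : ∃ w ∈ L, w ∉ V ∧ B (π w) (π w) < 1 := by
    obtain ⟨ε, hε, hball⟩ := Metric.eventually_nhds_iff.1 <|
      (continuous_bilinForm_apply_self B).continuousAt.eventually_lt_const
        (show B 0 0 < 1 by simp)
    obtain ⟨w, hwL, hw0, hw⟩ := exists_mem_lattice_norm_map_lt L π
      (by rw [hπ.range]; exact finrank_lt hV) hε
    have hw_lt : B (π w) (π w) < 1 := hball (by rwa [dist_zero_right])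
    refine ⟨w, hwL, fun hwV => ?_, hw_lt⟩
    rw [hπ.map_id w hwV] at hw_lt
    exact (hBV w hwL hwV hw0).not_gt hw_lt
  have hw_pos : 0 < criticalScale B π w := div_pos (sub_pos.2 hw) (hker w hwV)
  have hfin : {x | x ∈ L ∧ x ∉ V ∧ criticalScale B π w ≤ criticalScale B π x}.Finite :=
    (finite_setOf_mem_lattice_apply_self_le (rescaleKer_apply_self_pos hB π hw_pos) L 1).subset
      fun x ⟨hxL, hxV, hx⟩ => ⟨hxL, (le_criticalScale_iff (hker x hxV)).1 hx⟩
  obtain ⟨z, ⟨hzL, hzV, hwz⟩, hz_max⟩ :=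
    Set.exists_max_image _ (criticalScale B π) hfin ⟨w, hwL, hwV, le_rfl⟩
  refine ⟨criticalScale B π z, hw_pos.trans_le hwz, fun x hxL hx0 => ?_, z, hzL, hzV,
    ((le_criticalScale_iff (hker z hzV)).1 le_rfl).antisymm
      ((criticalScale_le_iff (hker z hzV)).1 le_rfl)⟩
  by_cases hxV : x ∈ V
  · exact (hBV x hxL hxV hx0).trans_eq (rescaleKer_apply_self_of_mem hπ B _ hxV).symm
  · rw [← criticalScale_le_iff (hker x hxV)]
    rcases le_total (criticalScale B π w) (criticalScale B π x) with h | h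
    · exact hz_max x ⟨hxL, hxV, h⟩
    · exact h.trans hwz

variable {Γ : Subgroup (GeneralLinearGroup ℝ E)} {B : BilinForm ℝ E} {V : Submodule ℝ E}

theorem IsWellRoundedOn.exists_gt
    (hL : ∀ g ∈ Γ, ∀ x ∈ L, (g : End ℝ E) x ∈ L) (hB : IsInvariantInnerProduct Γ B)
    (hBV : IsWellRoundedOn L B V) (hV : ∀ g ∈ Γ, V ∈ End.invtSubmodule (g : End ℝ E))
    (hV_top : V ≠ ⊤) :
    ∃ B' V', V < V' ∧ IsInvariantInnerProduct Γ B' ∧ IsWellRoundedOn L B' V' ∧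
      ∀ g ∈ Γ, V' ∈ End.invtSubmodule (g : End ℝ E) := by
  obtain ⟨π, hπ, hπΓ⟩ := hB.exists_isProj_commute hV
  obtain ⟨s, hs, hs_le, z, hzL, hzV, hz⟩ :=
    exists_rescaleKer_min_eq_one hB.pos hV_top hBV.one_le hπ
  have hB' := hB.rescaleKer hπΓ hs
  refine ⟨rescaleKer B π s, span ℝ {x | x ∈ L ∧ rescaleKer B π s x x = 1}, ?_, hB',
    ⟨fun x hxL _ => hs_le x hxL, span_mono fun x hx => ⟨hx.1, subset_span hx, hx.2⟩⟩,
    hB'.span_norm_one_mem_invtSubmodule hL⟩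
  refine lt_of_le_of_ne (hBV.le_span.trans (span_mono ?_)) fun h => ?_
  · rintro x ⟨hxL, hxV, hx⟩
    exact ⟨hxL, (rescaleKer_apply_self_of_mem hπ B s hxV).trans hx⟩
  · exact hzV (h ▸ subset_span ⟨hzL, hz⟩)

theorem IsWellRoundedOn.exists_top
    (hL : ∀ g ∈ Γ, ∀ x ∈ L, (g : End ℝ E) x ∈ L) (hB : IsInvariantInnerProduct Γ B)
    (hBV : IsWellRoundedOn L B V) (hV : ∀ g ∈ Γ, V ∈ End.invtSubmodule (g : End ℝ E)) :
    ∃ B', IsInvariantInnerProduct Γ B' ∧ IsWellRoundedOn L B' ⊤ := by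
  induction V using WellFoundedGT.induction generalizing B with
  | ind V ih =>
    rcases eq_or_ne V ⊤ with rfl | hV_top
    · exact ⟨B, hB, hBV⟩
    · obtain ⟨B', V', hlt, hB', hBV', hV'⟩ := hBV.exists_gt hL hB hV hV_top
      exact ih V' hlt hB' hBV' hV'

theorem exists_invariant_form_with_spanning_minimal_vectors_general
    (Γ : Subgroup (GeneralLinearGroup ℝ E)) [Finite Γ]
    (hL : ∀ g ∈ Γ, ∀ x ∈ L, (g : End ℝ E) x ∈ L) :
    ∃ B, IsInvariantInnerProduct Γ B ∧ span ℝ (minimalVectors L B) = ⊤ := by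
  obtain ⟨B₀, hB₀⟩ := exists_isInvariantInnerProduct Γ
  have hbot : IsWellRoundedOn L B₀ ⊥ := ⟨fun _ _ hx hx0 => absurd hx hx0, bot_le⟩
  obtain ⟨B, hB, hB_top⟩ := hbot.exists_top hL hB₀ fun g _ => End.invtSubmodule.bot_mem _
  exact ⟨B, hB, hB_top.span_minimalVectors⟩

end Lattice

theorem mem_span_int_basisFun_iff {ι : Type*} [Finite ι] {x : ι → ℝ} :
    x ∈ span ℤ (Set.range (Pi.basisFun ℝ ι)) ↔ ∃ v : ι → ℤ, x = fun i => (v i : ℝ) := by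
  simp only [Basis.mem_span_iff_repr_mem, Pi.basisFun_repr, Set.mem_range, algebraMap_int_eq,
    eq_intCast, funext_iff, eq_comm (a := x _)]
  exact Classical.skolem

theorem minimalVectors_span_int_basisFun {ι : Type*} [Finite ι]
    (B : BilinForm ℝ (ι → ℝ)) :
    minimalVectors (span ℤ (Set.range (Pi.basisFun ℝ ι))) B =
      {x | ∃ v : ι → ℤ, v ≠ 0 ∧ (∀ w : ι → ℤ, w ≠ 0 →
        B x x ≤ B (fun i => (w i : ℝ)) (fun i => (w i : ℝ))) ∧ x = fun i => (v i : ℝ)} := by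
  have cast_ne_zero_iff : ∀ v : ι → ℤ, (fun i => (v i : ℝ)) ≠ 0 ↔ v ≠ 0 := fun v => by
    simp only [ne_eq, funext_iff, Pi.zero_apply, Int.cast_eq_zero]
  ext x
  constructor
  · rintro ⟨hx, hx0, hx_min⟩
    obtain ⟨v, rfl⟩ := mem_span_int_basisFun_iff.1 hx
    exact ⟨v, (cast_ne_zero_iff v).1 hx0, fun w hw =>
      hx_min _ (mem_span_int_basisFun_iff.2 ⟨w, rfl⟩) ((cast_ne_zero_iff w).2 hw), rfl⟩
  · rintro ⟨v, hv0, hv_min, rfl⟩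
    refine ⟨mem_span_int_basisFun_iff.2 ⟨v, rfl⟩, (cast_ne_zero_iff v).2 hv0, fun y hy hy0 => ?_⟩
    obtain ⟨w, rfl⟩ := mem_span_int_basisFun_iff.1 hy
    exact hv_min w ((cast_ne_zero_iff w).1 hy0)

theorem map_intCast_mulVec_mem_span_int_basisFun {m n : Type*} [Finite m] [Fintype n]
    (A : Matrix m n ℤ) {x : n → ℝ} (hx : x ∈ span ℤ (Set.range (Pi.basisFun ℝ n))) :
    (A.map (Int.cast : ℤ → ℝ)).mulVec x ∈ span ℤ (Set.range (Pi.basisFun ℝ m)) := by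
  obtain ⟨v, rfl⟩ := mem_span_int_basisFun_iff.1 hx
  exact mem_span_int_basisFun_iff.2
    ⟨A.mulVec v, funext fun i => ((Int.castRingHom ℝ).map_mulVec A v i).symm⟩

/-- The action on `ℝⁿ` of a group acting on `ℤⁿ` by integral matrices. -/
noncomputable def realAction {G n : Type*} [Group G] [Fintype n] [DecidableEq n]
    (ρ : G →* Matrix.GeneralLinearGroup n ℤ) : G →* GeneralLinearGroup ℝ (n → ℝ) :=
  Matrix.GeneralLinearGroup.toLin.toMonoidHom.comp
    ((Matrix.GeneralLinearGroup.map (Int.castRingHom ℝ)).comp ρ)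

theorem realAction_apply {G n : Type*} [Group G] [Fintype n] [DecidableEq n]
    (ρ : G →* Matrix.GeneralLinearGroup n ℤ) (g : G) (x : n → ℝ) :
    (realAction ρ g : End ℝ (n → ℝ)) x =
      ((ρ g : Matrix n n ℤ).map (Int.cast : ℤ → ℝ)).mulVec x := rfl

theorem realAction_range_apply_mem_span_int_basisFun {G n : Type*} [Group G] [Fintype n]
    [DecidableEq n] (ρ : G →* Matrix.GeneralLinearGroup n ℤ) :
    ∀ γ ∈ (realAction ρ).range, ∀ x ∈ span ℤ (Set.range (Pi.basisFun ℝ n)),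
      (γ : End ℝ (n → ℝ)) x ∈ span ℤ (Set.range (Pi.basisFun ℝ n)) := by
  rintro _ ⟨g, rfl⟩ x hx
  rw [realAction_apply]
  exact map_intCast_mulVec_mem_span_int_basisFun _ hx

/-- Key construction in the proof of Theorem 2.1: given a finite group `G` acting on the
lattice `ℤ^d ⊂ ℝ^d` via `ρ : G → GL_d(ℤ)`, there is a `G`-invariant positive-definite
symmetric bilinear form on `ℝ^d` such that the nonzero lattice vectors of minimal norm
span `ℝ^d`. -/
theorem exists_invariant_form_with_spanning_minimal_vectors
    (G : Type*) [Group G] [Finite G] (d : ℕ)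
    (ρ : G →* Matrix.GeneralLinearGroup (Fin d) ℤ) :
    ∃ B : LinearMap.BilinForm ℝ (Fin d → ℝ),
      (∀ x y : Fin d → ℝ, B x y = B y x) ∧
      (∀ x : Fin d → ℝ, x ≠ 0 → 0 < B x x) ∧
      (∀ (g : G) (x y : Fin d → ℝ),
        B (((ρ g : Matrix (Fin d) (Fin d) ℤ).map (Int.cast : ℤ → ℝ)).mulVec x)
          (((ρ g : Matrix (Fin d) (Fin d) ℤ).map (Int.cast : ℤ → ℝ)).mulVec y) = B x y) ∧
      Submodule.span ℝ
        {x : Fin d → ℝ | ∃ v : Fin d → ℤ, v ≠ 0 ∧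
          (∀ w : Fin d → ℤ, w ≠ 0 →
            B x x ≤ B (fun i => (w i : ℝ)) (fun i => (w i : ℝ))) ∧
          x = fun i => (v i : ℝ)} = ⊤ := by
  have : Finite (realAction ρ).range := Set.finite_range (realAction ρ)
  obtain ⟨B, hB, hspan⟩ := exists_invariant_form_with_spanning_minimal_vectors_general _
    (realAction_range_apply_mem_span_int_basisFun ρ)
  rw [minimalVectors_span_int_basisFun] at hspan
  exact ⟨B, hB.isSymm.eq, hB.pos, fun g => hB.map_map (realAction ρ g) ⟨g, rfl⟩, hspan⟩
end

section
/- Let A be an abelian group and let K, Q, S be subgroups of A. Then there is an injective group homomorphism from (KQ ∩ S)/((K∩S)(Q∩S)) into (KS ∩ Q)/((K∩Q)(S∩Q)). In particular the cardinality of the first quotient is at most that of the second. -/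
/-!
Both quotients are computed in `A / K`. The elements of `S` whose image in `A / K` lies in the
image of `Q` are exactly those of `KQ ∩ S`, so `KQ ∩ S` maps onto the intersection of the images
of `Q` and `S`. The kernel `K ∩ S` of this map lies in `(K ∩ S)(Q ∩ S)`, whose image is that of
`Q ∩ S`. Hence `(KQ ∩ S) / (K ∩ S)(Q ∩ S)` is the intersection of the images of `Q` and `S` modulo
the image of `Q ∩ S`, and this description is symmetric in `Q` and `S`.
-/

open Subgroup QuotientGroup

section Hom

variable {G H : Type*} [Group G] [Group H] (f : G →* H)

theorem map_comap_inf (S : Subgroup G) (T : Subgroup H) :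
    (T.comap f ⊓ S).map f = T ⊓ S.map f :=
  SetLike.coe_injective (Set.image_preimage_inter f S T)

theorem map_ker_sup_inf (Q S : Subgroup G) :
    ((f.ker ⊔ Q) ⊓ S).map f = Q.map f ⊓ S.map f := by
  rw [sup_comm, ← comap_map_eq, map_comap_inf]

theorem map_ker_inf_sup (S T : Subgroup G) : ((f.ker ⊓ S) ⊔ T).map f = T.map f := by
  rw [Subgroup.map_sup, (Subgroup.map_eq_bot_iff _).2 inf_le_left, bot_sup_eq]

theorem comap_subgroupMap_map_subgroupOf {N L : Subgroup G} (hNL : N ≤ L)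
    (hker : f.ker ⊓ L ≤ N) :
    ((N.map f).subgroupOf (L.map f)).comap (f.subgroupMap L) = N.subgroupOf L := by
  ext ⟨x, hx⟩
  simp only [mem_comap, mem_subgroupOf, MonoidHom.subgroupMap_apply_coe]
  refine ⟨?_, mem_map_of_mem f⟩
  rintro ⟨n, hn, hnx : f n = f x⟩
  have hdiff : n⁻¹ * x ∈ f.ker ⊓ L :=
    ⟨f.eq_iff.1 hnx.symm, L.mul_mem (L.inv_mem (hNL hn)) hx⟩
  simpa using N.mul_mem hn (hker hdiff)

/-- The isomorphism `L / N ≃* f(L) / f(N)` induced by a homomorphism `f` whose restriction to `L`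
has its kernel contained in `N`. -/
noncomputable def quotientSubgroupOfEquivMap {N L : Subgroup G} [(N.subgroupOf L).Normal]
    [((N.map f).subgroupOf (L.map f)).Normal] (hNL : N ≤ L) (hker : f.ker ⊓ L ≤ N) :
    L ⧸ N.subgroupOf L ≃* L.map f ⧸ (N.map f).subgroupOf (L.map f) :=
  liftEquiv (φ := (mk' _).comp (f.subgroupMap L)) _
    ((mk'_surjective _).comp (f.subgroupMap_surjective L))
    (by rw [← MonoidHom.comap_ker, ker_mk', comap_subgroupMap_map_subgroupOf f hNL hker])

end Hom

section Normal

variable {G : Type*} [Group G] (K Q S : Subgroup G) [K.Normal] [Q.Normal] [S.Normal]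

/-- The isomorphism of `(KQ ∩ S) / (K ∩ S)(Q ∩ S)` with the quotient, inside `G / K`, of the
intersection of the images of `Q` and `S` by the image of `Q ∩ S`. -/
noncomputable def supInfQuotientEquiv :
    ((K ⊔ Q) ⊓ S : Subgroup G) ⧸ ((K ⊓ S) ⊔ (Q ⊓ S)).subgroupOf ((K ⊔ Q) ⊓ S) ≃*
      (Q.map (mk' K) ⊓ S.map (mk' K) : Subgroup (G ⧸ K)) ⧸
        ((Q ⊓ S).map (mk' K)).subgroupOf (Q.map (mk' K) ⊓ S.map (mk' K)) :=
  have hker : (mk' K).ker ⊓ ((K ⊔ Q) ⊓ S) ≤ (K ⊓ S) ⊔ (Q ⊓ S) := by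
    rw [ker_mk']
    exact le_sup_of_le_left (inf_le_inf_left K inf_le_right)
  have hmap_inf : ((K ⊔ Q) ⊓ S).map (mk' K) = Q.map (mk' K) ⊓ S.map (mk' K) := by
    simpa only [ker_mk'] using map_ker_sup_inf (mk' K) Q S
  have hmap_sup : ((K ⊓ S) ⊔ (Q ⊓ S)).map (mk' K) = (Q ⊓ S).map (mk' K) := by
    simpa only [ker_mk'] using map_ker_inf_sup (mk' K) S (Q ⊓ S)
  (quotientSubgroupOfEquivMap (mk' K)
    (sup_le (inf_le_inf_right S le_sup_left) (inf_le_inf_right S le_sup_right)) hker).trans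
    (equivQuotientSubgroupOfOfEq hmap_sup hmap_inf)

theorem quotient_inj_of_subgroups_general :
    Nonempty
      ((((K ⊔ Q) ⊓ S : Subgroup G) ⧸ ((K ⊓ S) ⊔ (Q ⊓ S)).subgroupOf ((K ⊔ Q) ⊓ S)) ≃*
        (((K ⊔ S) ⊓ Q : Subgroup G) ⧸ ((K ⊓ Q) ⊔ (S ⊓ Q)).subgroupOf ((K ⊔ S) ⊓ Q))) :=
  have swap := equivQuotientSubgroupOfOfEq
    (congrArg (Subgroup.map (mk' K)) (inf_comm Q S)) (inf_comm (Q.map (mk' K)) (S.map (mk' K)))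
  ⟨(supInfQuotientEquiv K Q S).trans (swap.trans (supInfQuotientEquiv K S Q).symm)⟩

end Normal

/-- Group-theoretic step in the proof of Theorem 5.1: for subgroups `K`, `Q`, `S` of an
abelian group `A`, there is an injective group homomorphism
`(KQ ∩ S)/((K∩S)(Q∩S)) ↪ (KS ∩ Q)/((K∩Q)(S∩Q))`; in particular the cardinality of the
first quotient is at most that of the second. -/
theorem quotient_inj_of_subgroups {A : Type*} [CommGroup A] (K Q S : Subgroup A) :
    ∃ f : (((K ⊔ Q) ⊓ S : Subgroup A) ⧸ ((K ⊓ S) ⊔ (Q ⊓ S)).subgroupOf ((K ⊔ Q) ⊓ S)) →*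
          (((K ⊔ S) ⊓ Q : Subgroup A) ⧸ ((K ⊓ Q) ⊔ (S ⊓ Q)).subgroupOf ((K ⊔ S) ⊓ Q)),
      Function.Injective f ∧
      Cardinal.mk (((K ⊔ Q) ⊓ S : Subgroup A) ⧸ ((K ⊓ S) ⊔ (Q ⊓ S)).subgroupOf ((K ⊔ Q) ⊓ S))
        ≤ Cardinal.mk (((K ⊔ S) ⊓ Q : Subgroup A) ⧸ ((K ⊓ Q) ⊔ (S ⊓ Q)).subgroupOf ((K ⊔ S) ⊓ Q)) := by
  obtain ⟨e⟩ := quotient_inj_of_subgroups_general K Q S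
  exact ⟨e.toMonoidHom, e.injective, (Cardinal.mk_congr e.toEquiv).le⟩
end

section
/- With the signed-permutation setup (G ≤ W_g containing δ, acting transitively on {1,…,g}×{+1,−1}, with stabilizer H of (1,+1), positive set S, and primitivity condition that every τ ∈ G with Sτ = S lies in H): for each index i with i ≠ 1 and each sign ε ∈ {+1,−1}, there exists σ ∈ S and an index j such that σ(i,+1) = (j,ε); that is, some element of S takes i somewhere with sign ε. -/
/-- The signed permutation `δ`, sending `(i, ε)` to `(i, −ε)` (complex conjugation). -/
def signFlip (g : ℕ) : Equiv.Perm (Fin g × Bool) :=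
  Equiv.prodCongr (Equiv.refl (Fin g))
    ⟨fun b => !b, fun b => !b, fun b => Bool.not_not b, fun b => Bool.not_not b⟩

/-!
Choose `τ ∈ G` taking `(1, +)` to `(i, -ε)`. If every `σ ∈ S` took `i` to sign `-ε`, it would take
`(i, -ε)` to a positive element, so `Sτ ⊆ S`; as `S` is finite, `Sτ = S`, and primitivity makes `τ`
fix `(1, +)`, contrary to `i ≠ 1`.
-/

section Transporter

open scoped Pointwise RightActions

variable {Γ X : Type*} [Group Γ] [MulAction Γ X]

/-- The elements of `G` carrying the point `x` into `Φ`. The set `S` attached to a CM type is the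
case where `x` is the base point `(1, +)` and `Φ` is the set of positive elements. It is a set in
the ambient group `Γ`, so that it can be translated by elements of `Γ`. -/
def transporter (G : Subgroup Γ) (x : X) (Φ : Set X) : Set Γ :=
  {σ | σ ∈ G ∧ σ • x ∈ Φ}

theorem mul_mem_transporter_iff {G : Subgroup Γ} {x : X} {Φ : Set X} {σ τ : Γ}
    (hσ : σ ∈ G) (hτ : τ ∈ G) : σ * τ ∈ transporter G x Φ ↔ σ • τ • x ∈ Φ := by
  simp only [transporter, Set.mem_ofPred_eq, G.mul_mem hσ hτ, true_and, mul_smul]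

theorem transporter_op_smul_eq_self_iff {G : Subgroup Γ} {x : X} {Φ : Set X} {τ : Γ}
    (hfin : (transporter G x Φ).Finite) (hτ : τ ∈ G) :
    transporter G x Φ <• τ = transporter G x Φ ↔ ∀ σ ∈ transporter G x Φ, σ • τ • x ∈ Φ :=
  (MulAction.mem_stabilizer_set' hfin).trans <|
    forall₂_congr fun _ hσ => mul_mem_transporter_iff hσ.1 hτ

theorem exists_mem_transporter_smul_notMem {G : Subgroup Γ} {x y : X} {Φ : Set X}
    (hfin : (transporter G x Φ).Finite)
    (hprim : ∀ τ ∈ G, transporter G x Φ <• τ = transporter G x Φ → τ • x = x)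
    (hy : y ∈ MulAction.orbit G x) (hyx : y ≠ x) :
    ∃ σ ∈ transporter G x Φ, σ • y ∉ Φ := by
  obtain ⟨⟨τ, hτ⟩, rfl⟩ := hy
  by_contra! hmem
  exact hyx (hprim τ hτ ((transporter_op_smul_eq_self_iff hfin hτ).2 hmem))

end Transporter

theorem snd_apply_eq_beq_of_signed {ι κ : Type*} {σ : ι × Bool → κ × Bool}
    (hσ : ∀ p : ι × Bool, σ (p.1, !p.2) = ((σ p).1, !(σ p).2)) (i : ι) (b : Bool) :
    (σ (i, b)).2 = ((σ (i, true)).2 == b) := by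
  cases b
  · simpa using congrArg Prod.snd (hσ (i, true))
  · simp

theorem exists_mem_S_with_sign_general {ι : Type*} [Finite ι] (o : ι)
    (G : Subgroup (Equiv.Perm (ι × Bool)))
    (hsigned : ∀ σ ∈ G, ∀ p : ι × Bool, σ (p.1, !p.2) = ((σ p).1, !(σ p).2))
    (htrans : ∀ p q : ι × Bool, ∃ σ ∈ G, σ p = q)
    (hprim : ∀ τ ∈ G,
      (fun σ => σ * τ) '' {σ | σ ∈ G ∧ (σ (o, true)).2 = true}
          = {σ | σ ∈ G ∧ (σ (o, true)).2 = true} →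
      τ (o, true) = (o, true))
    (i : ι) (hi : i ≠ o) (ε : Bool) :
    ∃ σ, (σ ∈ G ∧ (σ (o, true)).2 = true) ∧ (σ (i, true)).2 = ε := by
  have horbit : (i, !ε) ∈ MulAction.orbit G (o, true) := by
    obtain ⟨τ, hτ, hτi⟩ := htrans (o, true) (i, !ε)
    exact ⟨⟨τ, hτ⟩, hτi⟩
  have hne : (i, !ε) ≠ (o, true) := fun h => hi (congrArg Prod.fst h)
  obtain ⟨σ, hσ, hneg⟩ := exists_mem_transporter_smul_notMem
    (Φ := {p : ι × Bool | p.2 = true}) (Set.toFinite _) hprim horbit hne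
  refine ⟨σ, hσ, ?_⟩
  have hsign : ¬((σ (i, true)).2 == !ε) = true :=
    snd_apply_eq_beq_of_signed (hsigned σ hσ.1) i (!ε) ▸ hneg
  simpa using hsign

/-- Lemma 7.7: in the signed-permutation setup (a subgroup `G ≤ W_g` containing `δ`,
acting transitively on `{1,…,g}×{±1}`, with `S` the set of elements of `G` sending
`(1,+1)` to some `(j,+1)`, and the primitivity condition that every `τ ∈ G` with
`Sτ = S` fixes `(1,+1)`), for each `i ≠ 1` and each sign `ε` some element of `S` takes
`i` somewhere with sign `ε`. -/
theorem exists_mem_S_with_sign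
    (g : ℕ) (hg : 0 < g) (G : Subgroup (Equiv.Perm (Fin g × Bool)))
    (hsigned : ∀ σ ∈ G, ∀ p : Fin g × Bool, σ (p.1, !p.2) = ((σ p).1, !(σ p).2))
    (hδ : signFlip g ∈ G)
    (htrans : ∀ p q : Fin g × Bool, ∃ σ ∈ G, σ p = q)
    (hprim : ∀ τ ∈ G,
      (fun σ => σ * τ) '' {σ | σ ∈ G ∧ (σ ((⟨0, hg⟩ : Fin g), true)).2 = true}
          = {σ | σ ∈ G ∧ (σ ((⟨0, hg⟩ : Fin g), true)).2 = true} →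
      τ ((⟨0, hg⟩ : Fin g), true) = ((⟨0, hg⟩ : Fin g), true)) :
    ∀ i : Fin g, i ≠ ⟨0, hg⟩ → ∀ ε : Bool,
      ∃ σ, (σ ∈ G ∧ (σ ((⟨0, hg⟩ : Fin g), true)).2 = true) ∧ (σ (i, true)).2 = ε := by
  exact exists_mem_S_with_sign_general ⟨0, hg⟩ G hsigned htrans hprim
end

section
/- With the signed-permutation setup (G ≤ W_g containing δ, acting transitively on {1,…,g}×{+1,−1}, with stabilizer H of (1,+1), positive set S, and primitivity condition that every τ ∈ G with Sτ = S lies in H), and with U ≤ ℤ^g the subgroup generated by the indicator vectors 1_{T(σ)} for σ ∈ G: if g = 2, then U = ℤ². -/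
/-- The subgroup `U ≤ ℤ^g` generated by the indicator vectors `1_{T(σ)}`, `σ ∈ G`, where
`T(σ) = {i : σ(j,+1) = (i,−1) for some j}`. -/
def imageLattice (g : ℕ) (G : Subgroup (Equiv.Perm (Fin g × Bool))) :
    AddSubgroup (Fin g → ℤ) :=
  AddSubgroup.closure
    {v | ∃ σ ∈ G, v = fun i => if ∃ j, σ (j, true) = (i, false) then 1 else 0}

/-!
Primitivity says that distinct points in the `G`-orbit of `(0, +1)` are told apart by the signs of
their images under `G`. For `g = 2` this gives `σ ∈ G` sending exactly one of `(0, +1)`, `(1, +1)`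
to a negative point, so that `T(σ)` is a singleton and `U` contains a standard basis vector. By
transitivity the other index lies in some `T(σ')`, and subtracting a multiple of the first basis
vector from `1_{T(σ')}` yields the second one.
-/

section Primitivity

variable {α : Type*} (G : Subgroup (Equiv.Perm (α × Bool)))

/-- The elements of `G` sending `p` to a point of positive sign. At `p = (1, +1)` this is the
set `S` of the paper (with indices starting at `0`, the point `(0, true)`). -/
def positiveSet (p : α × Bool) : Set (Equiv.Perm (α × Bool)) :=
  {σ | σ ∈ G ∧ (σ p).2 = true}

/-- The primitivity condition based at `p`: the right stabilizer in `G` of `positiveSet G p`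
fixes `p`. -/
def IsPrimitiveAt (p : α × Bool) : Prop :=
  ∀ τ ∈ G, (fun σ => σ * τ) '' positiveSet G p = positiveSet G p → τ p = p

variable {G}

theorem image_mul_right_positiveSet {τ : Equiv.Perm (α × Bool)} (hτ : τ ∈ G) (p : α × Bool) :
    (fun σ => σ * τ) '' positiveSet G (τ p) = positiveSet G p := by
  ext ρ
  simp [positiveSet, Set.image_mul_right, G.mul_mem_cancel_right (G.inv_mem hτ)]

theorem IsPrimitiveAt.exists_sign_ne {p : α × Bool} (hprim : IsPrimitiveAt G p)
    {τ : Equiv.Perm (α × Bool)} (hτ : τ ∈ G) (hp : τ p ≠ p) :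
    ∃ σ ∈ G, (σ (τ p)).2 ≠ (σ p).2 := by
  by_contra! hsign
  have hpos : positiveSet G (τ p) = positiveSet G p :=
    Set.ext fun σ => and_congr_right fun hσ => by rw [hsign σ hσ]
  exact hp (hprim τ hτ (by simpa only [hpos] using image_mul_right_positiveSet hτ p))

end Primitivity

section NegativeIndicator

variable {g : ℕ}

/-- The indicator vector `1_{T(σ)}` of the set of indices `i` such that `σ` sends some positive
point to `(i, −1)`. -/
def negativeIndicator (σ : Equiv.Perm (Fin g × Bool)) : Fin g → ℤ :=
  fun i => if ∃ j, σ (j, true) = (i, false) then 1 else 0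

theorem negativeIndicator_mem_imageLattice {G : Subgroup (Equiv.Perm (Fin g × Bool))}
    {σ : Equiv.Perm (Fin g × Bool)} (hσ : σ ∈ G) : negativeIndicator σ ∈ imageLattice g G :=
  AddSubgroup.subset_closure ⟨σ, hσ, rfl⟩

theorem negativeIndicator_apply_eq_one {σ : Equiv.Perm (Fin g × Bool)} {i j : Fin g}
    (h : σ (j, true) = (i, false)) : negativeIndicator σ i = 1 :=
  if_pos ⟨j, h⟩

theorem negativeIndicator_eq_single {σ : Equiv.Perm (Fin g × Bool)} {j : Fin g}
    (hj : (σ (j, true)).2 = false) (hpos : ∀ k ≠ j, (σ (k, true)).2 = true) :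
    negativeIndicator σ = Pi.single (σ (j, true)).1 1 := by
  have hT (i : Fin g) : (∃ k, σ (k, true) = (i, false)) ↔ i = (σ (j, true)).1 := by
    constructor
    · rintro ⟨k, hk⟩
      obtain rfl : k = j := by
        by_contra hkj
        simpa [hk] using hpos k hkj
      rw [hk]
    · rintro rfl
      exact ⟨j, Prod.ext rfl hj⟩
  ext i
  simp only [negativeIndicator, hT, Pi.single_apply]

end NegativeIndicator

theorem addSubgroup_eq_top_of_single_mem_of_ne {ι : Type*} [Finite ι] [DecidableEq ι]
    {U : AddSubgroup (ι → ℤ)} {k : ι} (hsingle : ∀ i ≠ k, Pi.single i 1 ∈ U)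
    {v : ι → ℤ} (hv : v ∈ U) (hvk : v k = 1) : U = ⊤ := by
  have mem_of_apply_eq_zero (w : ι → ℤ) (hw : w k = 0) : w ∈ U := by
    refine AddSubgroup.pi_mem_of_single_mem w fun i => ?_
    rcases eq_or_ne i k with rfl | hi
    · simp [hw]
    · simpa [← Pi.single_smul] using U.zsmul_mem (hsingle i hi) (w i)
  refine (AddSubgroup.eq_top_iff' U).2 fun w => ?_
  have hsub : w - w k • v ∈ U := mem_of_apply_eq_zero _ (by simp [hvk])
  simpa using U.add_mem hsub (U.zsmul_mem hv (w k))

theorem exists_single_mem_imageLattice_of_sign_ne {G : Subgroup (Equiv.Perm (Fin 2 × Bool))}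
    {σ : Equiv.Perm (Fin 2 × Bool)} (hσ : σ ∈ G) (hne : (σ (1, true)).2 ≠ (σ (0, true)).2) :
    ∃ i, Pi.single i 1 ∈ imageLattice 2 G := by
  obtain ⟨j, hj, hpos⟩ :
      ∃ j, (σ (j, true)).2 = false ∧ ∀ k ≠ j, (σ (k, true)).2 = true := by
    cases h : (σ (0, true)).2
    · exact ⟨0, h, by simpa [Fin.forall_fin_two, h] using hne⟩
    · exact ⟨1, by simpa [h] using hne, by simpa [Fin.forall_fin_two] using h⟩
  exact ⟨_, negativeIndicator_eq_single hj hpos ▸ negativeIndicator_mem_imageLattice hσ⟩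

theorem imageLattice_eq_top_of_two_general (G : Subgroup (Equiv.Perm (Fin 2 × Bool)))
    (htrans : ∀ p q : Fin 2 × Bool, ∃ σ ∈ G, σ p = q) (hprim : IsPrimitiveAt G (0, true)) :
    imageLattice 2 G = ⊤ := by
  obtain ⟨τ, hτ, hτ01⟩ := htrans (0, true) (1, true)
  obtain ⟨σ, hσ, hne⟩ := hprim.exists_sign_ne hτ (by simp [hτ01])
  rw [hτ01] at hne
  obtain ⟨i, hi⟩ := exists_single_mem_imageLattice_of_sign_ne hσ hne
  obtain ⟨k, hk⟩ : ∃ k, ∀ j ≠ k, j = i := (by decide : ∀ i : Fin 2, ∃ k, ∀ j ≠ k, j = i) i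
  obtain ⟨ρ, hρ, hρk⟩ := htrans (0, true) (k, false)
  exact addSubgroup_eq_top_of_single_mem_of_ne (fun j hj => hk j hj ▸ hi)
    (negativeIndicator_mem_imageLattice hρ) (negativeIndicator_apply_eq_one hρk)

/-- Lemma 7.9: in the signed-permutation setup with `g = 2`, the lattice `U` generated by
the indicator vectors `1_{T(σ)}`, `σ ∈ G`, is all of `ℤ²`. -/
theorem imageLattice_eq_top_of_two
    (G : Subgroup (Equiv.Perm (Fin 2 × Bool)))
    (hsigned : ∀ σ ∈ G, ∀ p : Fin 2 × Bool, σ (p.1, !p.2) = ((σ p).1, !(σ p).2))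
    (hδ : signFlip 2 ∈ G)
    (htrans : ∀ p q : Fin 2 × Bool, ∃ σ ∈ G, σ p = q)
    (hprim : ∀ τ ∈ G,
      (fun σ => σ * τ) '' {σ | σ ∈ G ∧ (σ ((0 : Fin 2), true)).2 = true}
          = {σ | σ ∈ G ∧ (σ ((0 : Fin 2), true)).2 = true} →
      τ ((0 : Fin 2), true) = ((0 : Fin 2), true)) :
    imageLattice 2 G = ⊤ := by
  exact imageLattice_eq_top_of_two_general G htrans hprim
end

section
/- Let F₂ = ℤ/2ℤ and let S₄ be the symmetric group on {1,2,3,4}. Let M = F₂⁴ with S₄ permuting the standard basis vectors a₁,a₂,a₃,a₄; let M₀ ⊆ M be the span of a₁+a₂+a₃+a₄ (a trivial submodule); let M₁ = M/M₀; and let M₂ ⊆ M₁ be the F₂[S₄]-submodule generated by the images of a₁+a₂ and a₁+a₃. Let P be the 3-element set of partitions of {1,2,3,4} into two pairs, with its natural S₄-action; let N = F₂^P be the corresponding permutation module with basis b₁,b₂,b₃; and let N₀ ⊆ N be the span of b₁+b₂+b₃. Then N/N₀ and M₂ are isomorphic as F₂[S₄]-modules, i.e. there is an S₄-equivariant F₂-linear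 isomorphism N/N₀ ≅ M₂. -/
/-!
Send the basis vector `b_f` of `N` to the class in `M₁` of the indicator `a_i + a_{f i}` of a block
of `f`. The other block has the complementary indicator, so the class does not depend on `i`, and
this independence is what makes the map equivariant. For a fixed `i`, the evaluation `f ↦ f i` is a
bijection from `P` onto the points other than `i`: hence every `a_i + a_j` is the indicator of a
block, which gives the range, and the coordinate of `∑ f, v f • (a_i + a_{f i})` at `f i` is `v f`,
which gives the kernel.
-/

/-- The set of partitions of `{1,2,3,4}` into two pairs, encoded (S₄-equivariantly) as the
fixed-point-free involutions in `S₄`; the `S₄`-action is by conjugation. -/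
def PairPartition : Type := {f : Equiv.Perm (Fin 4) // f * f = 1 ∧ ∀ i, f i ≠ i}

/-- The natural (conjugation) action of `S₄` on partitions of `{1,2,3,4}` into two pairs. -/
def partAct (σ : Equiv.Perm (Fin 4)) (f : PairPartition) : PairPartition :=
  ⟨σ * f.1 * σ⁻¹, by
    obtain ⟨h1, h2⟩ := f.2
    constructor
    · have h : σ * f.1 * σ⁻¹ * (σ * f.1 * σ⁻¹) = σ * (f.1 * f.1) * σ⁻¹ := by group
      rw [h, h1, mul_one, mul_inv_cancel]
    · intro i hi
      have h3 : σ (f.1 (σ⁻¹ i)) = i := by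
        simpa [Equiv.Perm.mul_apply] using hi
      have h4 : f.1 (σ⁻¹ i) = σ⁻¹ i := by
        have := congrArg (fun x => σ⁻¹ x) h3
        simpa using this
      exact h2 _ h4⟩

/-- `M₀`: the trivial submodule of `M = F₂⁴` spanned by `a₁+a₂+a₃+a₄`. -/
def Mzero : Submodule (ZMod 2) (Fin 4 → ZMod 2) :=
  Submodule.span (ZMod 2) {fun _ => 1}

/-- `M₂`: the `F₂[S₄]`-submodule of `M₁ = M/M₀` generated by the images of `a₁+a₂` and
`a₁+a₃` (equivalently, spanned by all the images of `aᵢ+aⱼ`, `i ≠ j`). -/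
def Mtwo : Submodule (ZMod 2) ((Fin 4 → ZMod 2) ⧸ Mzero) :=
  Submodule.span (ZMod 2)
    {x | ∃ i j : Fin 4, i ≠ j ∧
      x = Submodule.Quotient.mk (Pi.single i 1 + Pi.single j 1)}

/-- `N₀`: the trivial submodule of the permutation module `N = F₂^P` spanned by
`b₁+b₂+b₃`. -/
def Nzero : Submodule (ZMod 2) (PairPartition → ZMod 2) :=
  Submodule.span (ZMod 2) {fun _ => 1}

section SpanOne

variable {R ι κ : Type*} [Semiring R]

theorem mem_span_one_iff {x : ι → R} :
    x ∈ Submodule.span R {fun _ : ι => (1 : R)} ↔ ∃ k, ∀ i, x i = k := by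
  simp [Submodule.mem_span_singleton, funext_iff, eq_comm]

theorem span_one_le_comap_funLeft (g : ι → κ) :
    Submodule.span R {fun _ : κ => (1 : R)} ≤
      (Submodule.span R {fun _ : ι => (1 : R)}).comap (LinearMap.funLeft R R g) :=
  (Submodule.span_singleton_le_iff_mem _ _).2 (Submodule.mem_span_singleton_self _)

end SpanOne

section BlockIndicator

variable {α : Type*} [DecidableEq α]

/-- The vector `a_i + a_{f i}`. When `f` is a fixed-point-free involution, standing for a partition
into pairs, it is the indicator of the block of that partition containing `i`. -/
def blockIndicator (R : Type*) [AddMonoidWithOne R] (f : Equiv.Perm α) (i : α) : α → R :=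
  Pi.single i 1 + Pi.single (f i) 1

theorem blockIndicator_conj_apply (R : Type*) [AddMonoidWithOne R] (σ f : Equiv.Perm α) (i k : α) :
    blockIndicator R (σ * f * σ⁻¹) i k = blockIndicator R f (σ⁻¹ i) (σ⁻¹ k) := by
  simp [blockIndicator, Pi.single_apply, Equiv.eq_symm_apply, Equiv.symm_apply_eq]

theorem blockIndicator_apply_of_involutive {R : Type*} [AddCommMonoidWithOne R]
    {f : Equiv.Perm α} (hf : Function.Involutive f) (i : α) :
    blockIndicator R f (f i) = blockIndicator R f i := by
  rw [blockIndicator, hf i, add_comm, blockIndicator]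

end BlockIndicator

namespace PairPartition

instance : Fintype PairPartition :=
  inferInstanceAs (Fintype {f : Equiv.Perm (Fin 4) // f * f = 1 ∧ ∀ i, f i ≠ i})

instance : MulAction (Equiv.Perm (Fin 4)) PairPartition where
  smul := partAct
  one_smul f := Subtype.ext (by change 1 * f.1 * 1⁻¹ = f.1; group)
  mul_smul σ τ f := Subtype.ext (by
    change σ * τ * f.1 * (σ * τ)⁻¹ = σ * (τ * f.1 * τ⁻¹) * σ⁻¹; group)

theorem coe_smul (σ : Equiv.Perm (Fin 4)) (f : PairPartition) : (σ • f).1 = σ * f.1 * σ⁻¹ :=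
  rfl

theorem involutive (f : PairPartition) : Function.Involutive f.1 :=
  fun i => Equiv.congr_fun f.2.1 i

theorem apply_ne (f : PairPartition) (i : Fin 4) : f.1 i ≠ i :=
  f.2.2 i

theorem card_eq_three : Fintype.card PairPartition = 3 := by
  decide

theorem apply_injective (i : Fin 4) : Function.Injective fun f : PairPartition => f.1 i := by
  intro f g (hfg : f.1 i = g.1 i)
  have hfi := f.involutive i
  have hgi := g.involutive i
  refine Subtype.ext (Equiv.ext fun k => ?_)
  obtain rfl | hki := eq_or_ne k i
  · exact hfg
  obtain rfl | hkj := eq_or_ne k (f.1 i)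
  · rw [hfi, hfg, hgi]
  -- Both `f k` and `g k` are the fourth point, outside `{i, f i, k}`.
  have hf₁ : f.1 k ≠ f.1 i := f.1.injective.ne hki
  have hf₂ : f.1 k ≠ i := fun h => hkj (by rw [← h, f.involutive])
  have hg₁ : g.1 k ≠ f.1 i := hfg ▸ g.1.injective.ne hki
  have hg₂ : g.1 k ≠ i := fun h => hkj (by rw [hfg, ← h, g.involutive])
  have hi := f.apply_ne i
  have hf := f.apply_ne k
  have hg := g.apply_ne k
  omega

theorem exists_apply_eq {i j : Fin 4} (hij : j ≠ i) : ∃ f : PairPartition, f.1 i = j := by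
  let eval : PairPartition → {j // j ≠ i} := fun f => ⟨f.1 i, f.apply_ne i⟩
  have eval_injective : Function.Injective eval := fun f g h =>
    apply_injective i (congrArg Subtype.val h)
  have eval_bijective : Function.Bijective eval :=
    (Fintype.bijective_iff_injective_and_card eval).2
      ⟨eval_injective, by simp [card_eq_three]⟩
  obtain ⟨f, hf⟩ := eval_bijective.surjective ⟨j, hij⟩
  exact ⟨f, congrArg Subtype.val hf⟩

theorem blockIndicator_add_eq_one (R : Type*) [AddCommMonoidWithOne R] (f : PairPartition)
    {i j : Fin 4} (hji : j ≠ i) (hjf : j ≠ f.1 i) :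
    blockIndicator R f.1 i + blockIndicator R f.1 j = 1 := by
  have hfj : f.1 j ≠ i := fun h => hjf (by rw [← h, f.involutive])
  have hff : f.1 j ≠ f.1 i := f.1.injective.ne hji
  have hi := f.apply_ne i
  have hj := f.apply_ne j
  have huniv : ({i, f.1 i, j, f.1 j} : Finset (Fin 4)) = Finset.univ := by
    refine Finset.eq_univ_of_card _ ?_
    simp [hi.symm, hj.symm, hji.symm, hjf.symm, hfj.symm, hff.symm]
  calc blockIndicator R f.1 i + blockIndicator R f.1 j
      = ∑ k ∈ {i, f.1 i, j, f.1 j}, Pi.single k (1 : R) := by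
        simp [blockIndicator, add_assoc, hi.symm, hj.symm, hji.symm, hjf.symm, hfj.symm, hff.symm]
    _ = 1 := by rw [huniv]; exact Finset.univ_sum_single 1

theorem sum_smul_blockIndicator_apply_self {R : Type*} [Semiring R] (v : PairPartition → R)
    (i : Fin 4) :
    (∑ f, v f • blockIndicator R f.1 i) i = ∑ f, v f := by
  simp [blockIndicator, Finset.sum_apply, (apply_ne _ i).symm]

theorem sum_smul_blockIndicator_apply_apply {R : Type*} [Semiring R] (v : PairPartition → R)
    (i : Fin 4) (f : PairPartition) :
    (∑ g, v g • blockIndicator R g.1 i) (f.1 i) = v f := by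
  classical
  simp [blockIndicator, Finset.sum_apply, Pi.single_apply, f.apply_ne i,
    (apply_injective i).eq_iff]

theorem mk_blockIndicator_eq (f : PairPartition) (i j : Fin 4) :
    (Submodule.Quotient.mk (blockIndicator (ZMod 2) f.1 i) : (Fin 4 → ZMod 2) ⧸ Mzero) =
      Submodule.Quotient.mk (blockIndicator (ZMod 2) f.1 j) := by
  by_cases hji : j = i
  · rw [hji]
  by_cases hjf : j = f.1 i
  · rw [hjf, blockIndicator_apply_of_involutive f.involutive]
  rw [Submodule.Quotient.eq, CharTwo.sub_eq_add, f.blockIndicator_add_eq_one _ hji hjf]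
  exact Submodule.mem_span_singleton_self _

end PairPartition

section BlockMap

variable (v : PairPartition → ZMod 2)

/-- The linear map `N → M₁` sending `b_f` to the class of the indicator of a block of `f`. The block
containing `0` is used; `blockMap_apply` shows that any other point may replace `0`. -/
def blockMap : (PairPartition → ZMod 2) →ₗ[ZMod 2] (Fin 4 → ZMod 2) ⧸ Mzero :=
  Fintype.linearCombination (ZMod 2) fun f =>
    Submodule.Quotient.mk (blockIndicator (ZMod 2) f.1 0)

theorem blockMap_apply (i : Fin 4) :
    blockMap v = Submodule.Quotient.mk (∑ f, v f • blockIndicator (ZMod 2) f.1 i) := by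
  calc blockMap v
      = ∑ f, v f • Mzero.mkQ (blockIndicator (ZMod 2) f.1 0) := Fintype.linearCombination_apply ..
    _ = ∑ f, v f • Mzero.mkQ (blockIndicator (ZMod 2) f.1 i) :=
        Finset.sum_congr rfl fun f _ => congrArg (v f • ·) (f.mk_blockIndicator_eq 0 i)
    _ = Mzero.mkQ (∑ f, v f • blockIndicator (ZMod 2) f.1 i) := by simp only [map_sum, map_smul]

theorem ker_blockMap : LinearMap.ker blockMap = Nzero := by
  ext v
  rw [LinearMap.mem_ker, blockMap_apply v 0, Submodule.Quotient.mk_eq_zero, Mzero, Nzero,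
    mem_span_one_iff, mem_span_one_iff]
  refine exists_congr fun k => ⟨fun h f => ?_, fun h j => ?_⟩
  · rw [← h (f.1 0), PairPartition.sum_smul_blockIndicator_apply_apply]
  · obtain rfl | hj := eq_or_ne j 0
    · have three_eq_one : (3 : ZMod 2) = 1 := rfl
      rw [PairPartition.sum_smul_blockIndicator_apply_self]
      simp [h, PairPartition.card_eq_three, three_eq_one]
    · obtain ⟨f, rfl⟩ := PairPartition.exists_apply_eq hj
      rw [PairPartition.sum_smul_blockIndicator_apply_apply, h]

theorem range_blockMap : LinearMap.range blockMap = Mtwo := by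
  rw [blockMap, Fintype.range_linearCombination, Mtwo]
  congr 1
  ext x
  constructor
  · rintro ⟨f, rfl⟩
    exact ⟨0, f.1 0, (f.apply_ne 0).symm, rfl⟩
  · rintro ⟨i, j, hij, rfl⟩
    obtain ⟨f, rfl⟩ := PairPartition.exists_apply_eq hij.symm
    exact ⟨f, f.mk_blockIndicator_eq 0 i⟩

/-- The action of `σ` on `M₁` by permutation of coordinates. -/
def permQuotient (σ : Equiv.Perm (Fin 4)) :
    (Fin 4 → ZMod 2) ⧸ Mzero →ₗ[ZMod 2] (Fin 4 → ZMod 2) ⧸ Mzero :=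
  Mzero.mapQ Mzero (LinearMap.funLeft (ZMod 2) (ZMod 2) ⇑σ⁻¹) (span_one_le_comap_funLeft _)

theorem permQuotient_mk (σ : Equiv.Perm (Fin 4)) (m : Fin 4 → ZMod 2) :
    permQuotient σ (Submodule.Quotient.mk m) = Submodule.Quotient.mk fun i => m (σ⁻¹ i) :=
  rfl

theorem blockMap_partAct (σ : Equiv.Perm (Fin 4)) :
    blockMap (fun f => v (partAct σ⁻¹ f)) = permQuotient σ (blockMap v) := by
  rw [blockMap_apply _ 0, blockMap_apply v (σ⁻¹ 0), permQuotient_mk]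
  congr 1
  ext k
  calc (∑ f, v (partAct σ⁻¹ f) • blockIndicator (ZMod 2) f.1 0) k
      = ∑ f, v (σ⁻¹ • f) • blockIndicator (ZMod 2) f.1 0 k := Finset.sum_apply ..
    _ = ∑ f, v f • blockIndicator (ZMod 2) (σ • f).1 0 k :=
        Fintype.sum_equiv (MulAction.toPerm σ⁻¹) _ _ fun f => by
          rw [MulAction.toPerm_apply, smul_inv_smul]
    _ = ∑ f, v f • blockIndicator (ZMod 2) f.1 (σ⁻¹ 0) (σ⁻¹ k) := by
        simp only [PairPartition.coe_smul, blockIndicator_conj_apply]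
    _ = (∑ f, v f • blockIndicator (ZMod 2) f.1 (σ⁻¹ 0)) (σ⁻¹ k) := by
        simp only [Finset.sum_apply, Pi.smul_apply]

/-- The isomorphism `N/N₀ ≅ M₂` induced by `blockMap`. -/
noncomputable def blockEquiv : ((PairPartition → ZMod 2) ⧸ Nzero) ≃ₗ[ZMod 2] Mtwo :=
  (Submodule.quotEquivOfEq _ _ ker_blockMap.symm).trans
    (blockMap.quotKerEquivRange.trans (LinearEquiv.ofEq _ _ range_blockMap))

theorem coe_blockEquiv_mk :
    (blockEquiv (Submodule.Quotient.mk v) : (Fin 4 → ZMod 2) ⧸ Mzero) = blockMap v :=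
  rfl

end BlockMap

/-- The representation-theoretic computation underlying Lemma 6.1: `N/N₀` and `M₂` are
isomorphic as `F₂[S₄]`-modules, i.e. there is an `S₄`-equivariant `F₂`-linear
isomorphism `N/N₀ ≅ M₂`.  Equivariance is expressed on representatives: the action of
`σ` on `N` is `(σ • v) f = v (σ⁻¹ • f)` and on `M = F₂⁴` is `(σ • m) i = m (σ⁻¹ i)`. -/
theorem resolvent_module_iso :
    ∃ e : ((PairPartition → ZMod 2) ⧸ Nzero) ≃ₗ[ZMod 2] Mtwo,
      ∀ (σ : Equiv.Perm (Fin 4)) (v : PairPartition → ZMod 2) (m : Fin 4 → ZMod 2),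
        (Submodule.Quotient.mk m : (Fin 4 → ZMod 2) ⧸ Mzero)
            = (e (Submodule.Quotient.mk v) : (Fin 4 → ZMod 2) ⧸ Mzero) →
        ((e (Submodule.Quotient.mk (fun f => v (partAct σ⁻¹ f)))
              : (Fin 4 → ZMod 2) ⧸ Mzero))
          = Submodule.Quotient.mk (fun i => m (σ⁻¹ i)) := by
  refine ⟨blockEquiv, fun σ v m hm => ?_⟩
  rw [coe_blockEquiv_mk] at hm ⊢
  rw [blockMap_partAct, ← hm, permQuotient_mk]
end
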